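/- arXiv:1106.1189 — 4 statements merged into one kernel-verified Lean document; each statement's English description precedes it below -/
import Mathlib

section
/- Let k be an integer with 2 ≤ k < 1000, and define the polynomial P_k(z) = ((2π)^{2k−1}/(2k)!) ∑_{j=0}^{k} (−1)^j B_{2j} B_{2k−2j} C(2k,2j) z^{2j} + ζ(2k−1)(z^{2k−1} + (−1)^k z). Then every complex root of P_k lies on the unit circle (has absolute value 1), and all roots of P_k are simple. -/
/-- `zetaVal m = ∑_{n=1}^∞ n^{−m}`, the value of the Riemann zeta function
at the integer `m`. -/
noncomputable def zetaVal (m : ℕ) : ℝ := ∑' n : ℕ, 1 / ((n : ℝ) + 1) ^ m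

/-- The polynomial
`P_k(z) = ((2π)^{2k−1}/(2k)!) ∑_{j=0}^{k} (−1)^j B_{2j} B_{2k−2j} C(2k,2j) z^{2j}
+ ζ(2k−1)(z^{2k−1} + (−1)^k z)`, viewed as a polynomial over `ℂ`. -/
noncomputable def Ppoly (k : ℕ) : Polynomial ℂ :=
  Polynomial.C ((((2 * Real.pi) ^ (2 * k - 1) / (Nat.factorial (2 * k))) : ℝ) : ℂ) *
    ∑ j ∈ Finset.range (k + 1),
      Polynomial.C ((-1 : ℂ) ^ j * ((bernoulli (2 * j) : ℚ) : ℂ)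
        * ((bernoulli (2 * k - 2 * j) : ℚ) : ℂ)
        * ((Nat.choose (2 * k) (2 * j)) : ℂ)) * Polynomial.X ^ (2 * j)
  + Polynomial.C ((zetaVal (2 * k - 1) : ℂ)) *
      (Polynomial.X ^ (2 * k - 1) + Polynomial.C ((-1 : ℂ) ^ k) * Polynomial.X)

section SelfInv
open Polynomial ComplexConjugate

lemma si_factor (a w : ℂ) (hw0 : w ≠ 0) (hw : ‖w‖ < 1) (ha : 1 < ‖a‖) :
    ‖w‖ * ‖(conj w)⁻¹ - a‖ < ‖w - a‖ := by
  have h1 : ‖w‖ * ‖(conj w)⁻¹ - a‖ = ‖1 - conj w * a‖ := by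
    have hc : conj w ≠ 0 := by simpa using hw0
    rw [← Complex.norm_conj w, ← norm_mul]
    congr 1
    field_simp
  rw [h1]
  apply lt_of_pow_lt_pow_left₀ 2 (norm_nonneg _)
  have hw2 : ‖w‖ ^ 2 < 1 := by nlinarith [norm_nonneg w]
  have ha2 : 1 < ‖a‖ ^ 2 := by nlinarith
  rw [← Complex.normSq_eq_norm_sq] at *
  rw [← Complex.normSq_eq_norm_sq] at *
  simp only [Complex.normSq_apply, Complex.sub_re, Complex.sub_im, Complex.mul_re, Complex.mul_im,
    Complex.conj_re, Complex.conj_im, Complex.one_re, Complex.one_im] at *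
  nlinarith [mul_pos (sub_pos.2 hw2) (sub_pos.2 ha2)]

lemma si_ineq (h : ℂ[X]) (n : ℕ) (hn : 0 < n) (hdeg : h.natDegree ≤ n)
    (hne : ∀ z : ℂ, ‖z‖ ≤ 1 → h.eval z ≠ 0)
    (hreal : ∀ z : ℂ, h.eval (conj z) = conj (h.eval z))
    (w : ℂ) (hw0 : w ≠ 0) (hw : ‖w‖ < 1) :
    ‖w‖ ^ n * ‖h.eval w⁻¹‖ < ‖h.eval w‖ := by
  have hs := IsAlgClosed.splits h
  have hpos : 0 < ‖h.eval w‖ := norm_pos_iff.2 (hne w hw.le)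
  have hwp : 0 < ‖w‖ := norm_pos_iff.2 hw0
  have e1 : ‖h.eval w⁻¹‖ = ‖h.eval (conj w)⁻¹‖ := by
    rw [← map_inv₀, hreal, Complex.norm_conj]
  rw [e1]
  by_cases hz : h.eval (conj w)⁻¹ = 0
  · rw [hz]; simpa using hpos
  have hh0 : h ≠ 0 := by rintro rfl; simp at hz
  have hl : 0 < ‖h.leadingCoeff‖ := norm_pos_iff.2 (leadingCoeff_ne_zero.2 hh0)
  have hroot : ∀ a ∈ h.roots, 1 < ‖a‖ := by
    intro a ha
    by_contra hcon
    exact hne a (not_lt.1 hcon) (isRoot_of_mem_roots ha)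
  have hnorm : ∀ x : ℂ, ‖h.eval x‖ = ‖h.leadingCoeff‖ * (h.roots.map fun a => ‖x - a‖).prod := by
    intro x
    rw [hs.eval_eq_prod_roots, norm_mul]
    congr 1
    generalize h.roots = s
    induction s using Multiset.induction with
    | empty => simp
    | cons a s ih => simp only [Multiset.map_cons, Multiset.prod_cons, norm_mul, ih]
  have hcard := hs.natDegree_eq_card_roots
  have e2 : ‖w‖ ^ h.natDegree * (h.roots.map fun a => ‖(conj w)⁻¹ - a‖).prod
      = (h.roots.map fun a => ‖w‖ * ‖(conj w)⁻¹ - a‖).prod := by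
    rw [Multiset.prod_map_mul, Multiset.map_const', Multiset.prod_replicate, hcard]
  by_cases h0 : h.roots = 0
  · rw [hnorm, hnorm, h0]
    simp only [Multiset.map_zero, Multiset.prod_zero, mul_one]
    have : ‖w‖ ^ n < 1 := pow_lt_one₀ hwp.le hw hn.ne'
    nlinarith
  · have key : (h.roots.map fun a => ‖w‖ * ‖(conj w)⁻¹ - a‖).prod
        < (h.roots.map fun a => ‖w - a‖).prod := by
      apply Multiset.prod_map_lt_prod_map h0
      · intro a ha
        apply mul_pos hwp
        rw [norm_pos_iff, sub_ne_zero]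
        rintro rfl
        exact hz (isRoot_of_mem_roots ha)
      · intro a ha
        exact si_factor a w hw0 hw (hroot a ha)
    have h2 : ‖w‖ ^ n ≤ ‖w‖ ^ h.natDegree := pow_le_pow_of_le_one hwp.le hw.le hdeg
    calc ‖w‖ ^ n * ‖h.eval (conj w)⁻¹‖ ≤ ‖w‖ ^ h.natDegree * ‖h.eval (conj w)⁻¹‖ := by gcongr
      _ = ‖h.leadingCoeff‖ * (‖w‖ ^ h.natDegree * (h.roots.map fun a => ‖(conj w)⁻¹ - a‖).prod) := by
        rw [hnorm]; ring
      _ < ‖h.eval w‖ := by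
        rw [e2, hnorm]; gcongr

lemma si_re (a z : ℂ) (hz : ‖z‖ = 1) (ha : 1 < ‖a‖) : (z * (1 / (z - a))).re < 1 / 2 := by
  have hne : z - a ≠ 0 := by
    rw [sub_ne_zero]; rintro rfl; linarith
  have hz2 : Complex.normSq z = 1 := by rw [Complex.normSq_eq_norm_sq, hz]; norm_num
  have ha2 : 1 < Complex.normSq a := by rw [Complex.normSq_eq_norm_sq]; nlinarith
  have hp : 0 < Complex.normSq (z - a) := Complex.normSq_pos.2 hne
  rw [mul_one_div, Complex.div_re, ← add_div, div_lt_iff₀ hp]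
  simp only [Complex.normSq_apply, Complex.sub_re, Complex.sub_im] at *
  nlinarith

lemma si_logderiv (h : ℂ[X]) (n : ℕ) (hn : 0 < n) (hdeg : h.natDegree ≤ n)
    (hne : ∀ z : ℂ, ‖z‖ ≤ 1 → h.eval z ≠ 0) (z : ℂ) (hz : ‖z‖ = 1) :
    (z * (h.derivative.eval z / h.eval z)).re < n / 2 := by
  have hs := IsAlgClosed.splits h
  rw [hs.eval_derivative_div_eval_of_ne_zero (hne z hz.le), ← Multiset.sum_map_mul_left]
  have hroot : ∀ a ∈ h.roots, 1 < ‖a‖ := by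
    intro a ha
    by_contra hcon
    exact hne a (not_lt.1 hcon) (isRoot_of_mem_roots ha)
  have hcard := hs.natDegree_eq_card_roots
  have e : ∀ s : Multiset ℂ, (s.map fun a => z * (1 / (z - a))).sum.re
      = (s.map fun a => (z * (1 / (z - a))).re).sum := by
    intro s
    induction s using Multiset.induction with
    | empty => simp
    | cons a s ih => simp only [Multiset.map_cons, Multiset.sum_cons, Complex.add_re, ih]
  rw [e]
  have hn' : (0 : ℝ) < n := by exact_mod_cast hn
  have hd' : (h.natDegree : ℝ) ≤ n := by exact_mod_cast hdeg
  by_cases h0 : h.roots = 0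
  · rw [h0]; simp; exact hn
  · have := Multiset.sum_lt_sum_of_nonempty (s := h.roots)
      (f := fun a => (z * (1 / (z - a))).re) (g := fun _ => (1 / 2 : ℝ)) h0
      (fun a ha => si_re a z hz (hroot a ha))
    rw [Multiset.map_const', Multiset.sum_replicate, ← hcard, nsmul_eq_mul] at this
    linarith

lemma si_main (h f : ℂ[X]) (n : ℕ) (hn : 0 < n) (hdeg : h.natDegree ≤ n)
    (hne : ∀ z : ℂ, ‖z‖ ≤ 1 → h.eval z ≠ 0)
    (hreal : ∀ z : ℂ, h.eval (conj z) = conj (h.eval z))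
    (ε : ℂ) (hε : ‖ε‖ = 1)
    (hf : ∀ z : ℂ, z ≠ 0 → f.eval z = h.eval z + ε * z ^ n * h.eval z⁻¹)
    (hf0 : f.eval 0 ≠ 0) (z : ℂ) (hz : f.IsRoot z) :
    ‖z‖ = 1 ∧ f.rootMultiplicity z = 1 := by
  have hz0 : z ≠ 0 := by rintro rfl; exact hf0 hz
  have hfne : f ≠ 0 := by rintro rfl; simp at hf0
  have hzp : 0 < ‖z‖ := norm_pos_iff.2 hz0
  have hroot : h.eval z + ε * z ^ n * h.eval z⁻¹ = 0 := by rw [← hf z hz0]; exact hz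
  have hnorm : ‖h.eval z‖ = ‖z‖ ^ n * ‖h.eval z⁻¹‖ := by
    rw [eq_neg_of_add_eq_zero_left hroot, norm_neg, norm_mul, norm_mul, hε, norm_pow, one_mul]
  have hz1 : ‖z‖ = 1 := by
    rcases lt_trichotomy ‖z‖ 1 with hlt | heq | hgt
    · have := si_ineq h n hn hdeg hne hreal z hz0 hlt
      linarith
    · exact heq
    · have := si_ineq h n hn hdeg hne hreal z⁻¹ (inv_ne_zero hz0)
        (by rw [norm_inv]; exact inv_lt_one_of_one_lt₀ hgt)
      rw [inv_inv, norm_inv, inv_pow, inv_mul_lt_iff₀ (pow_pos hzp n)] at this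
      linarith
  refine ⟨hz1, ?_⟩
  have hpos : 0 < f.rootMultiplicity z := (rootMultiplicity_pos hfne).2 hz
  by_contra hcon
  have h2 : 1 < f.rootMultiplicity z := by omega
  obtain ⟨-, hd⟩ := (one_lt_rootMultiplicity_iff_isRoot hfne).1 h2
  have hd0 : f.derivative.eval z = 0 := hd
  have D1 : HasDerivAt (fun x => f.eval x) (f.derivative.eval z) z := f.hasDerivAt z
  have D2 : HasDerivAt (fun x : ℂ => h.eval x + ε * x ^ n * h.eval x⁻¹)
      (h.derivative.eval z + ((ε * (n * z ^ (n - 1))) * h.eval z⁻¹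
        + ε * z ^ n * (h.derivative.eval z⁻¹ * (-(z ^ 2)⁻¹)))) z := by
    apply (h.hasDerivAt z).add
    apply HasDerivAt.mul
    · exact (hasDerivAt_pow n z).const_mul ε
    · exact (h.hasDerivAt z⁻¹).comp z (hasDerivAt_inv hz0)
  have heq : (fun x => f.eval x) =ᶠ[nhds z] fun x : ℂ => h.eval x + ε * x ^ n * h.eval x⁻¹ := by
    filter_upwards [isOpen_ne.mem_nhds hz0] with x hx
    exact hf x hx
  have D3 := (D2.congr_of_eventuallyEq heq).unique D1
  rw [hd0] at D3
  have hconj : z⁻¹ = conj z := by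
    rw [Complex.inv_def, Complex.normSq_eq_norm_sq, hz1]; simp
  have hA := hne z hz1.le
  have hB : h.eval z⁻¹ ≠ 0 := hne _ (by rw [norm_inv, hz1]; simp)
  have hq : z * (h.derivative.eval z / h.eval z) + z⁻¹ * (h.derivative.eval z⁻¹ / h.eval z⁻¹) = n := by
    have hzn : z * z ^ (n - 1) = z ^ n := by
      rw [← pow_succ', Nat.sub_add_cancel hn]
    have e1 : z * h.derivative.eval z + n * (ε * z ^ n * h.eval z⁻¹)
        - ε * z ^ n * (z⁻¹ * h.derivative.eval z⁻¹) = 0 := by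
      have : z * (z ^ 2)⁻¹ = z⁻¹ := by field_simp
      linear_combination z * D3 - n * ε * h.eval z⁻¹ * hzn + ε * z^n * h.derivative.eval z⁻¹ * this
    have e2 : ε * z ^ n * h.eval z⁻¹ = - h.eval z := by linear_combination hroot
    have e3 : ε * z ^ n = - h.eval z / h.eval z⁻¹ := by
      rw [eq_div_iff hB]; exact e2
    rw [e2, e3] at e1
    generalize h.eval z⁻¹ = B at hB e1 ⊢
    generalize h.derivative.eval z⁻¹ = B' at e1 ⊢
    field_simp at e1 ⊢
    linear_combination e1
  have hderiv : h.derivative.eval z⁻¹ = conj (h.derivative.eval z) := by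
    have hmap : h.map (starRingEnd ℂ) = h := by
      apply Polynomial.funext
      intro r
      have := hreal (conj r)
      rw [Complex.conj_conj] at this
      rw [this]
      have h3 := Polynomial.eval_map_apply (p := h) (starRingEnd ℂ) (conj r)
      rw [Complex.conj_conj] at h3
      exact h3
    have h4 := Polynomial.eval_map_apply (p := h.derivative) (starRingEnd ℂ) z
    rw [← Polynomial.derivative_map, hmap] at h4
    rw [hconj, h4]
  have hlt := si_logderiv h n hn hdeg hne z hz1
  rw [hderiv, hconj, hreal, ← map_div₀, ← map_mul, Complex.add_conj] at hq
  have := congrArg Complex.re hq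
  simp only [Complex.ofReal_re, Complex.natCast_re] at this
  linarith
end SelfInv
section ZetaBounds

lemma zv_summable (m : ℕ) (hm : 2 ≤ m) : Summable (fun n : ℕ => 1 / ((n : ℝ) + 1) ^ m) := by
  have := (summable_nat_add_iff 1).2 (Real.summable_one_div_nat_pow.2 (show 1 < m by omega))
  simpa using this

lemma zv_lower (m N : ℕ) (hm : 2 ≤ m) :
    ∑ n ∈ Finset.range N, 1 / ((n : ℝ) + 1) ^ m ≤ zetaVal m :=
  (zv_summable m hm).sum_le_tsum _ (fun n _ => by positivity)

lemma zv_upper (p m N : ℕ) (hp : 2 ≤ p) (hm : p ≤ m) :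
    zetaVal m ≤ ∑ n ∈ Finset.range N, 1 / ((n : ℝ) + 1) ^ m
      + (1 / ((N : ℝ) + 1)) ^ (m - p) *
        (zetaVal p - ∑ n ∈ Finset.range N, 1 / ((n : ℝ) + 1) ^ p) := by
  have h1 := (zv_summable m (by omega)).sum_add_tsum_nat_add N
  have h2 := (zv_summable p hp).sum_add_tsum_nat_add N
  unfold zetaVal
  rw [← h1, ← h2, add_sub_cancel_left, ← tsum_mul_left]
  apply add_le_add le_rfl
  apply Summable.tsum_le_tsum
  · intro n
    have e : ((n + N : ℕ) : ℝ) + 1 = (n + N : ℝ) + 1 := by push_cast; ring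
    rw [e]
    have h3 : ((n + N : ℝ) + 1) ^ m = ((n + N : ℝ) + 1) ^ (m - p) * ((n + N : ℝ) + 1) ^ p := by
      rw [← pow_add, Nat.sub_add_cancel hm]
    rw [h3, one_div_pow, one_div_mul_one_div]
    gcongr
    linarith [(Nat.cast_nonneg n : (0 : ℝ) ≤ n)]
  · exact (summable_nat_add_iff N).2 (zv_summable m (by omega))
  · exact ((summable_nat_add_iff N).2 (zv_summable p hp)).mul_left _

lemma zv_of_hasSum {m : ℕ} (hm : m ≠ 0) {a : ℝ} (h : HasSum (fun n : ℕ => 1 / (n : ℝ) ^ m) a) :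
    zetaVal m = a := by
  have := (hasSum_nat_add_iff' 1).2 h
  simp [hm] at this
  unfold zetaVal
  simpa using this.tsum_eq

lemma zv_two : zetaVal 2 = Real.pi ^ 2 / 6 := zv_of_hasSum (by norm_num) hasSum_zeta_two
lemma zv_four : zetaVal 4 = Real.pi ^ 4 / 90 := zv_of_hasSum (by norm_num) hasSum_zeta_four

lemma zv_even (j : ℕ) (hj : j ≠ 0) : zetaVal (2 * j) =
    (-1) ^ (j + 1) * 2 ^ (2 * j - 1) * Real.pi ^ (2 * j) * (bernoulli (2 * j) : ℝ) /
      (2 * j).factorial :=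
  zv_of_hasSum (by omega) (hasSum_zeta_nat hj)

lemma zv_one_le (m : ℕ) (hm : 2 ≤ m) : 1 ≤ zetaVal m := by
  have := zv_lower m 1 hm
  simpa using this

lemma pi_two_bd : Real.pi ^ 2 ≤ 9.8697 := by
  have := Real.pi_lt_d6; have := Real.pi_pos
  nlinarith

lemma pi_four_bd : Real.pi ^ 4 ≤ 97.42 := by
  have h := pi_two_bd
  have : Real.pi ^ 4 = (Real.pi ^ 2) ^ 2 := by ring
  rw [this]
  nlinarith [sq_nonneg Real.pi]

lemma zv_sub_one (m : ℕ) (hm : 4 ≤ m) : zetaVal m - 1 ≤ 1.32 * (1 / 2) ^ m := by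
  have h := zv_upper 4 m 1 (by norm_num) hm
  simp only [Finset.range_one, Finset.sum_singleton, zv_four] at h
  have h1 := pi_four_bd
  have e : (1 / 2 : ℝ) ^ m = (1 / 2) ^ (m - 4) * (1 / 2) ^ 4 := by
    rw [← pow_add, Nat.sub_add_cancel hm]
  norm_num at h
  rw [e]
  have hp : (0 : ℝ) < (1 / 2) ^ (m - 4) := by positivity
  nlinarith

end ZetaBounds
section Small
open Polynomial

lemma small_root (P : ℂ[X]) (hP : P ≠ 0) (S : Finset ℂ) (hS : ∀ x ∈ S, P.eval x = 0)
    (h1 : ∀ x ∈ S, ‖x‖ = 1) (hd : P.natDegree ≤ S.card) (z : ℂ) (hz : P.IsRoot z) :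
    ‖z‖ = 1 ∧ P.rootMultiplicity z = 1 := by
  have hr := roots_eq_of_natDegree_le_card_of_ne_zero hS hd hP
  have hm : z ∈ P.roots := (mem_roots hP).2 hz
  have hm' : z ∈ S := by rw [hr] at hm; exact hm
  refine ⟨h1 z hm', ?_⟩
  rw [← count_roots, hr]
  exact Multiset.count_eq_one_of_mem S.nodup hm'

noncomputable def wpt (p : ℝ × ℝ) : ℂ := ⟨p.1 / 2, p.2 * Real.sqrt (1 - p.1 ^ 2 / 4)⟩

noncomputable def wset (T : Finset ℝ) : Finset ℂ := (T ×ˢ ({1, -1} : Finset ℝ)).image wpt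

lemma wset_card (T : Finset ℝ) (hT : ∀ t ∈ T, -2 < t ∧ t < 2) : (wset T).card = 2 * T.card := by
  unfold wset
  rw [Finset.card_image_of_injOn]
  · rw [Finset.card_product, Finset.card_pair (by norm_num), mul_comm]
  · rintro ⟨a, b⟩ ha ⟨c, d⟩ hc h
    simp only [Finset.coe_product, Set.mem_prod, Finset.mem_coe] at ha hc
    have h1 := congrArg Complex.re h
    have h2 := congrArg Complex.im h
    simp only [wpt] at h1 h2
    have hac : a = c := by linarith
    subst hac
    have := hT a ha.1
    have hs : 0 < Real.sqrt (1 - a ^ 2 / 4) := Real.sqrt_pos.2 (by nlinarith)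
    have := mul_right_cancel₀ hs.ne' h2
    rw [this]

lemma wset_spec (T : Finset ℝ) (hT : ∀ t ∈ T, -2 < t ∧ t < 2) (x : ℂ) (hx : x ∈ wset T) :
    ‖x‖ = 1 ∧ x.im ≠ 0 ∧ x ≠ 0 ∧ ∃ t ∈ T, x + x⁻¹ = t := by
  unfold wset at hx
  simp only [Finset.mem_image, Finset.mem_product] at hx
  obtain ⟨⟨t, s⟩, ⟨ht, hs⟩, rfl⟩ := hx
  have h2 := hT t ht
  have hp : 0 < 1 - t ^ 2 / 4 := by nlinarith
  have hsq : 0 < Real.sqrt (1 - t ^ 2 / 4) := Real.sqrt_pos.2 hp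
  have hsq2 := Real.sq_sqrt hp.le
  have hs2 : s = 1 ∨ s = -1 := by simpa using hs
  have hs3 : s ^ 2 = 1 := by rcases hs2 with rfl | rfl <;> norm_num
  have hs0 : s ≠ 0 := by rintro rfl; norm_num at hs3
  have hn : Complex.normSq (wpt (t, s)) = 1 := by
    simp only [wpt, Complex.normSq_apply]
    generalize Real.sqrt (1 - t ^ 2 / 4) = r at *
    have : s * r * (s * r) = s ^ 2 * r ^ 2 := by ring
    rw [this, hs3, hsq2]; ring
  have him : (wpt (t, s)).im ≠ 0 := by simp only [wpt]; positivity
  refine ⟨?_, him, ?_, t, ht, ?_⟩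
  · rw [Complex.normSq_eq_norm_sq] at hn
    nlinarith [norm_nonneg (wpt (t, s))]
  · intro h; rw [h] at hn; simp at hn
  · rw [Complex.inv_def, hn]
    apply Complex.ext <;> simp [wpt]

lemma small_even (P : ℂ[X]) (hP : P ≠ 0) (T : Finset ℝ) (hT : ∀ t ∈ T, -2 < t ∧ t < 2)
    (hev : ∀ x : ℂ, x ≠ 0 → ∀ t ∈ T, x + x⁻¹ = t → P.eval x = 0)
    (hd : P.natDegree ≤ 2 * T.card) (z : ℂ) (hz : P.IsRoot z) :
    ‖z‖ = 1 ∧ P.rootMultiplicity z = 1 := by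
  apply small_root P hP (wset T) _ _ _ z hz
  · intro x hx
    obtain ⟨-, -, h0, t, ht, h⟩ := wset_spec T hT x hx
    exact hev x h0 t ht h
  · intro x hx; exact (wset_spec T hT x hx).1
  · rw [wset_card T hT]; exact hd

lemma small_odd (P : ℂ[X]) (hP : P ≠ 0) (T : Finset ℝ) (hT : ∀ t ∈ T, -2 < t ∧ t < 2)
    (hev : ∀ x : ℂ, x ≠ 0 → ∀ t ∈ T, x + x⁻¹ = t → P.eval x = 0)
    (h1 : P.eval 1 = 0) (h2 : P.eval (-1) = 0)
    (hd : P.natDegree ≤ 2 * T.card + 2) (z : ℂ) (hz : P.IsRoot z) :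
    ‖z‖ = 1 ∧ P.rootMultiplicity z = 1 := by
  have hdis : Disjoint (wset T) ({1, -1} : Finset ℂ) := by
    rw [Finset.disjoint_left]
    intro x hx hx'
    have := (wset_spec T hT x hx).2.1
    simp only [Finset.mem_insert, Finset.mem_singleton] at hx'
    rcases hx' with rfl | rfl <;> simp at this
  apply small_root P hP (wset T ∪ {1, -1}) _ _ _ z hz
  · intro x hx
    rcases Finset.mem_union.1 hx with hx | hx
    · obtain ⟨-, -, h0, t, ht, h⟩ := wset_spec T hT x hx
      exact hev x h0 t ht h
    · simp only [Finset.mem_insert, Finset.mem_singleton] at hx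
      rcases hx with rfl | rfl <;> assumption
  · intro x hx
    rcases Finset.mem_union.1 hx with hx | hx
    · exact (wset_spec T hT x hx).1
    · simp only [Finset.mem_insert, Finset.mem_singleton] at hx
      rcases hx with rfl | rfl <;> simp
  · rw [Finset.card_union_of_disjoint hdis, wset_card T hT, Finset.card_pair]
    · exact hd
    · intro h; have := congrArg Complex.re h; norm_num at this

lemma ivt_up (q : ℝ → ℝ) (hq : Continuous q) (a b : ℝ) (hab : a < b) (ha : q a < 0) (hb : 0 < q b) :
    ∃ t, a < t ∧ t < b ∧ q t = 0 := by
  obtain ⟨t, ht, h⟩ := intermediate_value_Ioo hab.le hq.continuousOn (show (0:ℝ) ∈ Set.Ioo (q a) (q b) from ⟨ha, hb⟩)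
  exact ⟨t, ht.1, ht.2, h⟩

lemma ivt_dn (q : ℝ → ℝ) (hq : Continuous q) (a b : ℝ) (hab : a < b) (ha : 0 < q a) (hb : q b < 0) :
    ∃ t, a < t ∧ t < b ∧ q t = 0 := by
  obtain ⟨t, ht, h⟩ := intermediate_value_Ioo' hab.le hq.continuousOn (show (0:ℝ) ∈ Set.Ioo (q b) (q a) from ⟨hb, ha⟩)
  exact ⟨t, ht.1, ht.2, h⟩

lemma two_roots (q : ℝ → ℝ) (hq : Continuous q) (b : ℝ) (h0 : -2 < b) (h1 : b < 2)
    (ha : q (-2) < 0) (hb : 0 < q b) (hc : q 2 < 0) :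
    ∃ T : Finset ℝ, T.card = 2 ∧ (∀ t ∈ T, -2 < t ∧ t < 2) ∧ ∀ t ∈ T, q t = 0 := by
  obtain ⟨r, r1, r2, r3⟩ := ivt_up q hq _ _ h0 ha hb
  obtain ⟨s, s1, s2, s3⟩ := ivt_dn q hq _ _ h1 hb hc
  refine ⟨{r, s}, Finset.card_pair (by linarith), ?_, ?_⟩
  · intro t ht
    simp only [Finset.mem_insert, Finset.mem_singleton] at ht
    rcases ht with rfl | rfl <;> constructor <;> linarith
  · intro t ht
    simp only [Finset.mem_insert, Finset.mem_singleton] at ht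
    rcases ht with rfl | rfl <;> assumption

lemma four_roots (q : ℝ → ℝ) (hq : Continuous q) (b c d : ℝ) (h0 : -2 < b) (h1 : b < c)
    (h2 : c < d) (h3 : d < 2)
    (ha : q (-2) < 0) (hb : 0 < q b) (hc : q c < 0) (hd : 0 < q d) (he : q 2 < 0) :
    ∃ T : Finset ℝ, T.card = 4 ∧ (∀ t ∈ T, -2 < t ∧ t < 2) ∧ ∀ t ∈ T, q t = 0 := by
  obtain ⟨r, r1, r2, r3⟩ := ivt_up q hq _ _ h0 ha hb
  obtain ⟨s, s1, s2, s3⟩ := ivt_dn q hq _ _ h1 hb hc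
  obtain ⟨u, u1, u2, u3⟩ := ivt_up q hq _ _ h2 hc hd
  obtain ⟨v, v1, v2, v3⟩ := ivt_dn q hq _ _ h3 hd he
  have e1 : r ≠ s := by linarith
  have e2 : r ≠ u := by linarith
  have e3 : r ≠ v := by linarith
  have e4 : s ≠ u := by linarith
  have e5 : s ≠ v := by linarith
  have e6 : u ≠ v := by linarith
  refine ⟨{r, s, u, v}, ?_, ?_, ?_⟩
  · simp [e1, e2, e3, e4, e5, e6]
  · intro t ht
    simp only [Finset.mem_insert, Finset.mem_singleton] at ht
    rcases ht with rfl | rfl | rfl | rfl <;> constructor <;> linarith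
  · intro t ht
    simp only [Finset.mem_insert, Finset.mem_singleton] at ht
    rcases ht with rfl | rfl | rfl | rfl <;> assumption
end Small
section SmallCases
open Polynomial

lemma bern4 : _root_.bernoulli 4 = -1 / 30 := by
  rw [bernoulli_eq_bernoulli'_of_ne_one (by norm_num), bernoulli'_four]
lemma bern'5 : bernoulli' 5 = 0 := bernoulli'_eq_zero_of_odd (by decide) (by norm_num)
lemma bern'7 : bernoulli' 7 = 0 := bernoulli'_eq_zero_of_odd (by decide) (by norm_num)
lemma bern'9 : bernoulli' 9 = 0 := bernoulli'_eq_zero_of_odd (by decide) (by norm_num)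
lemma bern'6 : bernoulli' 6 = 1 / 42 := by
  rw [bernoulli'_def]
  norm_num [Finset.sum_range_succ, bern'5, bernoulli'_four, bernoulli'_three, bernoulli'_two,
    Nat.choose]
lemma bern'8 : bernoulli' 8 = -1 / 30 := by
  rw [bernoulli'_def]
  norm_num [Finset.sum_range_succ, bern'5, bern'6, bern'7, bernoulli'_four, bernoulli'_three,
    bernoulli'_two, Nat.choose]
lemma bern'10 : bernoulli' 10 = 5 / 66 := by
  rw [bernoulli'_def]
  norm_num [Finset.sum_range_succ, bern'5, bern'6, bern'7, bern'8, bern'9, bernoulli'_four,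
    bernoulli'_three, bernoulli'_two, Nat.choose]
lemma bern6 : _root_.bernoulli 6 = 1 / 42 := by
  rw [bernoulli_eq_bernoulli'_of_ne_one (by norm_num), bern'6]
lemma bern8 : _root_.bernoulli 8 = -1 / 30 := by
  rw [bernoulli_eq_bernoulli'_of_ne_one (by norm_num), bern'8]
lemma bern10 : _root_.bernoulli 10 = 5 / 66 := by
  rw [bernoulli_eq_bernoulli'_of_ne_one (by norm_num), bern'10]

lemma Ppoly_natDegree (k : ℕ) (hk : 2 ≤ k) : (Ppoly k).natDegree ≤ 2 * k := by
  unfold Ppoly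
  apply natDegree_add_le_of_degree_le
  · apply (natDegree_C_mul_le _ _).trans
    apply natDegree_sum_le_of_forall_le
    intro j hj
    have := Finset.mem_range.1 hj
    exact (natDegree_C_mul_X_pow_le _ _).trans (by omega)
  · apply (natDegree_C_mul_le _ _).trans
    apply natDegree_add_le_of_degree_le
    · rw [natDegree_X_pow]; omega
    · exact (natDegree_C_mul_le _ _).trans (by rw [natDegree_X]; omega)

lemma Ppoly_ne {k : ℕ} {z : ℂ} (h : (Ppoly k).eval z ≠ 0) : Ppoly k ≠ 0 := by
  intro h0; rw [h0] at h; simp at h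

lemma Ppoly_eval (k : ℕ) (z : ℂ) : (Ppoly k).eval z =
    ((((2 * Real.pi) ^ (2 * k - 1) / (Nat.factorial (2 * k))) : ℝ) : ℂ) *
    ∑ j ∈ Finset.range (k + 1), ((-1 : ℂ) ^ j * ((_root_.bernoulli (2 * j) : ℚ) : ℂ)
        * ((_root_.bernoulli (2 * k - 2 * j) : ℚ) : ℂ)
        * ((Nat.choose (2 * k) (2 * j)) : ℂ)) * z ^ (2 * j)
    + ((zetaVal (2 * k - 1) : ℂ)) * (z ^ (2 * k - 1) + (-1 : ℂ) ^ k * z) := by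
  simp [Ppoly, eval_finsetSum]

lemma ch64 : Nat.choose 6 4 = 15 := by decide
lemma ch86 : Nat.choose 8 6 = 28 := by decide
lemma ch84 : Nat.choose 8 4 = 70 := by decide
lemma ch104 : Nat.choose 10 4 = 210 := by decide
lemma ch106 : Nat.choose 10 6 = 210 := by decide
lemma ch108 : Nat.choose 10 8 = 45 := by decide

lemma eval2 (z : ℂ) : (Ppoly 2).eval z = (Real.pi : ℂ) ^ 3 / 3 *
    (-1 / 30 - 1 / 6 * z ^ 2 - 1 / 30 * z ^ 4) + zetaVal 3 * (z ^ 3 + z) := by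
  rw [Ppoly_eval]
  simp [Finset.sum_range_succ, bern4, Nat.choose, Nat.factorial]
  ring

lemma eval3 (z : ℂ) : (Ppoly 3).eval z = 2 * (Real.pi : ℂ) ^ 5 / 45 *
    (1 / 42 * (1 - z ^ 6) + 1 / 12 * (z ^ 2 - z ^ 4)) + zetaVal 5 * (z ^ 5 - z) := by
  rw [Ppoly_eval]
  simp [Finset.sum_range_succ, bern4, bern6, Nat.factorial, ch64, Nat.choose_two_right]
  ring

lemma eval4 (z : ℂ) : (Ppoly 4).eval z = (Real.pi : ℂ) ^ 7 / 315 *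
    (-1 / 30 * (1 + z ^ 8) - 1 / 9 * (z ^ 2 + z ^ 6) + 7 / 90 * z ^ 4)
      + zetaVal 7 * (z ^ 7 + z) := by
  rw [Ppoly_eval]
  simp [Finset.sum_range_succ, bern4, bern6, bern8, Nat.factorial, ch86, ch84,
    Nat.choose_two_right]
  ring

lemma eval5 (z : ℂ) : (Ppoly 5).eval z = 2 * (Real.pi : ℂ) ^ 9 / 14175 *
    (5 / 66 * (1 - z ^ 10) + 1 / 4 * (z ^ 2 - z ^ 8) - 1 / 6 * (z ^ 4 - z ^ 6))
      + zetaVal 9 * (z ^ 9 - z) := by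
  rw [Ppoly_eval]
  simp [Finset.sum_range_succ, bern4, bern6, bern8, bern10, Nat.factorial, ch104, ch106, ch108,
    Nat.choose_two_right]
  ring

lemma pi_pow_bd (n : ℕ) (hn : n ≠ 0) :
    (3.141592 : ℝ) ^ n < Real.pi ^ n ∧ Real.pi ^ n < 3.141593 ^ n :=
  ⟨pow_lt_pow_left₀ Real.pi_gt_d6 (by norm_num) hn,
    pow_lt_pow_left₀ Real.pi_lt_d6 Real.pi_pos.le hn⟩

lemma z3 : 1.2 < zetaVal 3 ∧ zetaVal 3 < 1.2048 := by
  have h1 := zv_lower 3 20 (by norm_num)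
  have h2 := zv_upper 2 3 20 (by norm_num) (by norm_num)
  have h3 := pi_two_bd
  rw [zv_two] at h2
  norm_num [Finset.sum_range_succ] at h1 h2
  constructor <;> linarith

lemma zm (m : ℕ) (hm : 4 ≤ m) : 1 + (1 / 2) ^ m + (1 / 3) ^ m ≤ zetaVal m ∧
    zetaVal m ≤ 1 + (1 / 2) ^ m + (1 / 3) ^ m + (1 / 4) ^ (m - 2) * 0.29 := by
  have h1 := zv_lower m 3 (by omega)
  have h2 := zv_upper 2 m 3 (by norm_num) (by omega)
  have h3 := pi_two_bd
  rw [zv_two] at h2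
  have hp : (0 : ℝ) < (1 / 4) ^ (m - 2) := by positivity
  norm_num [Finset.sum_range_succ] at h1 h2
  have e2 : (1 / 2 : ℝ) ^ m = (2 ^ m)⁻¹ := by rw [one_div, inv_pow]
  have e3 : (1 / 3 : ℝ) ^ m = (3 ^ m)⁻¹ := by rw [one_div, inv_pow]
  rw [e2, e3]
  constructor
  · exact h1
  · refine h2.trans ?_
    gcongr
    linarith

lemma case2 (z : ℂ) (hz : (Ppoly 2).IsRoot z) :
    ‖z‖ = 1 ∧ (Ppoly 2).rootMultiplicity z = 1 := by
  obtain ⟨z1, z2⟩ := z3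
  obtain ⟨p1, p2⟩ := pi_pow_bd 3 (by norm_num)
  norm_num at p1 p2
  obtain ⟨T, hT, hT1, hT2⟩ := two_roots
    (fun x => Real.pi ^ 3 / 3 * (-1 / 30 * (x ^ 2 - 2) - 1 / 6) + zetaVal 3 * x)
    (by fun_prop) (7 / 4) (by norm_num) (by norm_num) (by norm_num; nlinarith)
    (by norm_num; nlinarith) (by norm_num; nlinarith)
  refine small_even _ (Ppoly_ne (z := 0) ?_) T hT1 ?_ ?_ z hz
  · rw [eval2]; simp [Real.pi_ne_zero]
  · intro x hx t ht hxt
    have := congrArg (Complex.ofReal) (hT2 t ht)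
    push_cast at this
    rw [← hxt] at this
    rw [eval2]
    have h2 : ∀ A B : ℂ, A / 3 * (-1 / 30 - 1 / 6 * x ^ 2 - 1 / 30 * x ^ 4) + B * (x ^ 3 + x)
      = x ^ 2 * (A / 3 * (-1 / 30 * ((x + x⁻¹) ^ 2 - 2) - 1 / 6) + B * (x + x⁻¹)) := by
      intro A B; field_simp; ring
    rw [h2, this, mul_zero]
  · rw [hT]; exact Ppoly_natDegree 2 (by norm_num)

lemma case3 (z : ℂ) (hz : (Ppoly 3).IsRoot z) :
    ‖z‖ = 1 ∧ (Ppoly 3).rootMultiplicity z = 1 := by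
  obtain ⟨z1, z2⟩ := zm 5 (by norm_num)
  obtain ⟨p1, p2⟩ := pi_pow_bd 5 (by norm_num)
  norm_num at p1 p2 z1 z2
  obtain ⟨T, hT, hT1, hT2⟩ := two_roots
    (fun x => -(2 * Real.pi ^ 5 / 45) * (1 / 42 * (x ^ 2 - 1) + 1 / 12) + zetaVal 5 * x)
    (by fun_prop) (8 / 5) (by norm_num) (by norm_num) (by norm_num; nlinarith)
    (by norm_num; nlinarith) (by norm_num; nlinarith)
  refine small_odd _ (Ppoly_ne (z := 0) ?_) T hT1 ?_ ?_ ?_ ?_ z hz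
  · rw [eval3]; simp [Real.pi_ne_zero]
  · intro x hx t ht hxt
    have := congrArg (Complex.ofReal) (hT2 t ht)
    push_cast at this
    rw [← hxt] at this
    rw [eval3]
    have h2 : ∀ A B : ℂ, 2 * A / 45 * (1 / 42 * (1 - x ^ 6) + 1 / 12 * (x ^ 2 - x ^ 4))
        + B * (x ^ 5 - x)
      = x ^ 2 * (x ^ 2 - 1) *
        (-(2 * A / 45) * (1 / 42 * ((x + x⁻¹) ^ 2 - 1) + 1 / 12) + B * (x + x⁻¹)) := by
      intro A B; field_simp; ring
    rw [h2, this, mul_zero]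
  · rw [eval3]; ring
  · rw [eval3]; ring
  · rw [hT]; exact Ppoly_natDegree 3 (by norm_num)

lemma case4 (z : ℂ) (hz : (Ppoly 4).IsRoot z) :
    ‖z‖ = 1 ∧ (Ppoly 4).rootMultiplicity z = 1 := by
  obtain ⟨z1, z2⟩ := zm 7 (by norm_num)
  obtain ⟨p1, p2⟩ := pi_pow_bd 7 (by norm_num)
  norm_num at p1 p2 z1 z2
  obtain ⟨T, hT, hT1, hT2⟩ := four_roots
    (fun x => (Real.pi ^ 7 / 315) * (-1 / 30 * (x ^ 4 - 4 * x ^ 2 + 2)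
      - 1 / 9 * (x ^ 2 - 2) + 7 / 90) + zetaVal 7 * (x ^ 3 - 3 * x))
    (by fun_prop) (-1) (7 / 5) (93 / 50) (by norm_num) (by norm_num) (by norm_num) (by norm_num)
    (by norm_num; nlinarith) (by norm_num; nlinarith) (by norm_num; nlinarith)
    (by norm_num; nlinarith) (by norm_num; nlinarith)
  refine small_even _ (Ppoly_ne (z := 0) ?_) T hT1 ?_ ?_ z hz
  · rw [eval4]; simp [Real.pi_ne_zero]
  · intro x hx t ht hxt
    have := congrArg (Complex.ofReal) (hT2 t ht)
    push_cast at this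
    rw [← hxt] at this
    rw [eval4]
    have h2 : ∀ A B : ℂ, A / 315 *
        (-1 / 30 * (1 + x ^ 8) - 1 / 9 * (x ^ 2 + x ^ 6) + 7 / 90 * x ^ 4) + B * (x ^ 7 + x)
      = x ^ 4 * ((A / 315) * (-1 / 30 * ((x + x⁻¹) ^ 4 - 4 * (x + x⁻¹) ^ 2 + 2)
      - 1 / 9 * ((x + x⁻¹) ^ 2 - 2) + 7 / 90) + B * ((x + x⁻¹) ^ 3 - 3 * (x + x⁻¹))) := by
      intro A B; field_simp; ring
    rw [h2, this, mul_zero]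
  · rw [hT]; exact Ppoly_natDegree 4 (by norm_num)

lemma case5 (z : ℂ) (hz : (Ppoly 5).IsRoot z) :
    ‖z‖ = 1 ∧ (Ppoly 5).rootMultiplicity z = 1 := by
  obtain ⟨z1, z2⟩ := zm 9 (by norm_num)
  obtain ⟨p1, p2⟩ := pi_pow_bd 9 (by norm_num)
  norm_num at p1 p2 z1 z2
  obtain ⟨T, hT, hT1, hT2⟩ := four_roots
    (fun x => -(2 * Real.pi ^ 9 / 14175) * (5 / 66 * (x ^ 4 - 3 * x ^ 2 + 1)
      + 1 / 4 * (x ^ 2 - 1) - 1 / 6) + zetaVal 9 * (x ^ 3 - 2 * x))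
    (by fun_prop) (-1) (32 / 25) (71 / 40) (by norm_num) (by norm_num) (by norm_num) (by norm_num)
    (by norm_num; nlinarith) (by norm_num; nlinarith) (by norm_num; nlinarith)
    (by norm_num; nlinarith) (by norm_num; nlinarith)
  refine small_odd _ (Ppoly_ne (z := 0) ?_) T hT1 ?_ ?_ ?_ ?_ z hz
  · rw [eval5]; simp [Real.pi_ne_zero]
  · intro x hx t ht hxt
    have := congrArg (Complex.ofReal) (hT2 t ht)
    push_cast at this
    rw [← hxt] at this
    rw [eval5]
    have h2 : ∀ A B : ℂ, 2 * A / 14175 *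
        (5 / 66 * (1 - x ^ 10) + 1 / 4 * (x ^ 2 - x ^ 8) - 1 / 6 * (x ^ 4 - x ^ 6))
        + B * (x ^ 9 - x)
      = x ^ 4 * (x ^ 2 - 1) *
        (-(2 * A / 14175) * (5 / 66 * ((x + x⁻¹) ^ 4 - 3 * (x + x⁻¹) ^ 2 + 1)
      + 1 / 4 * ((x + x⁻¹) ^ 2 - 1) - 1 / 6) + B * ((x + x⁻¹) ^ 3 - 2 * (x + x⁻¹))) := by
      intro A B; field_simp; ring
    rw [h2, this, mul_zero]
  · rw [eval5]; ring
  · rw [eval5]; ring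
  · rw [hT]; exact Ppoly_natDegree 5 (by norm_num)
end SmallCases
section Analytic
open Polynomial Filter Topology

noncomputable def ua (j : ℕ) : ℝ :=
  (-1) ^ (j + 1) * (_root_.bernoulli (2 * j) : ℝ) * (2 * Real.pi) ^ (2 * j) / (2 * j).factorial / 2 - 1

lemma ua_zero : ua 0 = -3 / 2 := by
  simp [ua]; norm_num

lemma ua_eq (j : ℕ) (hj : j ≠ 0) : ua j = zetaVal (2 * j) - 1 := by
  rw [zv_even j hj, ua]
  have : (2 : ℝ) ^ (2 * j) = 2 ^ (2 * j - 1) * 2 := by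
    rw [← pow_succ, Nat.sub_add_cancel (by omega)]
  rw [mul_pow, this]
  ring

lemma ua_nonneg (j : ℕ) (hj : j ≠ 0) : 0 ≤ ua j := by
  rw [ua_eq j hj]
  linarith [zv_one_le (2 * j) (by omega)]

lemma ua_le (j : ℕ) (hj : 2 ≤ j) : ua j ≤ 1.32 * (1 / 4) ^ j := by
  rw [ua_eq j (by omega)]
  have := zv_sub_one (2 * j) (by omega)
  rw [pow_mul] at this
  norm_num at this ⊢
  exact this

lemma ua_abs (j : ℕ) (hj : 2 ≤ j) : |ua j| ≤ 1.32 * (1 / 4) ^ j := by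
  rw [abs_of_nonneg (ua_nonneg j (by omega))]; exact ua_le j hj

lemma ua_one : |ua 1| ≤ 2.58 * (1 / 4) := by
  rw [abs_of_nonneg (ua_nonneg 1 (by omega)), ua_eq 1 (by omega)]
  rw [show 2 * 1 = 2 from rfl, zv_two]
  linarith [pi_two_bd]

lemma ua_abs_zero : |ua 0| = 1.5 := by rw [ua_zero]; norm_num [abs_div]

lemma ua_sum (k : ℕ) (hk : 6 ≤ k) : ∑ j ∈ Finset.range (k + 1), |ua j * ua (k - j)|
    ≤ (10.8 + 1.75 * ((k : ℝ) - 3)) * (1 / 4) ^ k := by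
  obtain ⟨m, rfl⟩ : ∃ m, k = m + 4 := ⟨k - 4, by omega⟩
  have e0 : |ua 0 * ua (m + 4)| ≤ 1.98 * (1 / 4) ^ (m + 4) := by
    rw [abs_mul, ua_abs_zero]
    have := ua_abs (m + 4) (by omega)
    linarith
  have e1 : |ua 1 * ua (m + 3)| ≤ 3.4056 * (1 / 4) ^ (m + 4) := by
    rw [abs_mul]
    have := ua_abs (m + 3) (by omega)
    calc _ ≤ (2.58 * (1 / 4)) * (1.32 * (1 / 4 : ℝ) ^ (m + 3)) :=
          mul_le_mul ua_one this (abs_nonneg _) (by norm_num)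
      _ = _ := by ring
  have e2 : ∀ i ∈ Finset.range (m + 1), |ua (i + 2) * ua (m + 4 - (i + 2))|
      ≤ 1.7424 * (1 / 4) ^ (m + 4) := by
    intro i hi
    have hi' := Finset.mem_range.1 hi
    rw [abs_mul]
    have h1 := ua_abs (i + 2) (by omega)
    have h2 := ua_abs (m + 4 - (i + 2)) (by omega)
    calc _ ≤ (1.32 * (1 / 4) ^ (i + 2)) * (1.32 * (1 / 4 : ℝ) ^ (m + 4 - (i + 2))) :=
          mul_le_mul h1 h2 (abs_nonneg _) (by positivity)
      _ = 1.7424 * ((1 / 4) ^ (i + 2) * (1 / 4 : ℝ) ^ (m + 4 - (i + 2))) := by ring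
      _ = _ := by rw [← pow_add]; congr 2; omega
  have e3 := Finset.sum_le_sum e2
  rw [Finset.sum_const, Finset.card_range, nsmul_eq_mul] at e3
  have hsplit : ∑ j ∈ Finset.range (m + 4 + 1), |ua j * ua (m + 4 - j)|
      = |ua 0 * ua (m + 4)| + |ua 1 * ua (m + 3)|
        + ∑ i ∈ Finset.range (m + 1), |ua (i + 2) * ua (m + 4 - (i + 2))|
        + |ua 1 * ua (m + 3)| + |ua 0 * ua (m + 4)| := by
    rw [Finset.sum_range_succ, Finset.sum_range_succ, Finset.sum_range_succ', Finset.sum_range_succ']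
    have a1 : m + 4 - (m + 3) = 1 := by omega
    have a2 : m + 4 - (0 + 1) = m + 3 := by omega
    rw [a1, Nat.sub_self, Nat.sub_zero, a2, mul_comm (ua (m + 3)), mul_comm (ua (m + 4))]
    ring
  rw [hsplit]
  have hp : (0 : ℝ) < (1 / 4) ^ (m + 4) := by positivity
  have hm : (2 : ℝ) ≤ m := by exact_mod_cast (show 2 ≤ m by omega)
  push_cast at e3 ⊢
  generalize (1 / 4 : ℝ) ^ (m + 4) = q at *
  nlinarith

lemma sinh_bd (z : ℂ) (hz : ‖z‖ ≤ 1) :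
    2 * ‖Complex.sinh (Real.pi * z)‖ ≤ ‖z‖ * ‖1 + z ^ 2‖ * Real.sinh Real.pi := by
  have T : ∀ w : ℂ, Tendsto (fun n : ℕ => ‖(Real.pi : ℂ) * w *
      ∏ j ∈ Finset.range n, (1 + w ^ 2 / ((j : ℂ) + 1) ^ 2)‖) atTop
      (𝓝 ‖Complex.sinh (Real.pi * w)‖) := by
    intro w
    have h := (Complex.tendsto_euler_sin_prod (w * Complex.I)).norm
    have e : ‖Complex.sin (Real.pi * (w * Complex.I))‖ = ‖Complex.sinh (Real.pi * w)‖ := by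
      rw [← mul_assoc, Complex.sin_mul_I, norm_mul, Complex.norm_I, mul_one]
    rw [e] at h
    refine h.congr (fun n => ?_)
    rw [mul_pow, Complex.I_sq, ← mul_assoc, norm_mul, norm_mul _ Complex.I, Complex.norm_I, mul_one,
      ← norm_mul]
    congr 2
    apply Finset.prod_congr rfl
    intro j _
    ring
  have T1 := (tendsto_add_atTop_iff_nat 1).2 (T z)
  have T2 := (tendsto_add_atTop_iff_nat 1).2 (T 1)
  have e1 : ‖Complex.sinh (Real.pi * 1)‖ = Real.sinh Real.pi := by
    rw [mul_one, ← Complex.ofReal_sinh, Complex.norm_real, Real.norm_eq_abs,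
      abs_of_nonneg (Real.sinh_nonneg_iff.2 Real.pi_pos.le)]
  rw [e1] at T2
  refine le_of_tendsto_of_tendsto' (T1.const_mul 2) (T2.const_mul (‖z‖ * ‖1 + z ^ 2‖)) ?_
  intro n
  rw [Finset.prod_range_succ', Finset.prod_range_succ']
  simp only [norm_mul, Finset.prod_mul_distrib, norm_prod, Nat.cast_zero, zero_add, one_pow,
    div_one, norm_one, mul_one]
  have h2 : ‖(1 : ℂ) + 1‖ = 2 := by norm_num
  rw [h2]
  have hle : ∏ j ∈ Finset.range n, ‖1 + z ^ 2 / (((j + 1 : ℕ) : ℂ) + 1) ^ 2‖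
      ≤ ∏ j ∈ Finset.range n, ‖(1 : ℂ) + 1 / (((j + 1 : ℕ) : ℂ) + 1) ^ 2‖ := by
    apply Finset.prod_le_prod (fun _ _ => norm_nonneg _)
    intro j _
    have r : ((1 : ℂ) + 1 / (((j + 1 : ℕ) : ℂ) + 1) ^ 2)
      = ((1 + 1 / (((j + 1 : ℕ) : ℝ) + 1) ^ 2 : ℝ) : ℂ) := by push_cast; ring
    rw [r, Complex.norm_real, Real.norm_eq_abs, abs_of_nonneg (by positivity)]
    refine (norm_add_le _ _).trans ?_
    rw [norm_one, norm_div, norm_pow, norm_pow]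
    have r2 : ‖((j + 1 : ℕ) : ℂ) + 1‖ = ((j + 1 : ℕ) : ℝ) + 1 := by
      have : ((j + 1 : ℕ) : ℂ) + 1 = (((j + 1 : ℕ) : ℝ) + 1 : ℝ) := by push_cast; ring
      rw [this, Complex.norm_real, Real.norm_eq_abs, abs_of_nonneg (by positivity)]
    rw [r2]
    gcongr
    exact pow_le_one₀ (norm_nonneg _) hz
  generalize ∏ j ∈ Finset.range n, ‖1 + z ^ 2 / (((j + 1 : ℕ) : ℂ) + 1) ^ 2‖ = A at *
  generalize ∏ j ∈ Finset.range n, ‖(1 : ℂ) + 1 / (((j + 1 : ℕ) : ℂ) + 1) ^ 2‖ = B at *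
  have : 0 ≤ 2 * ‖(Real.pi : ℂ)‖ * ‖z‖ * ‖1 + z ^ 2‖ := by positivity
  nlinarith [mul_le_mul_of_nonneg_left hle this]

lemma exp_bd (z : ℂ) (hz : ‖z‖ ≤ 1) :
    2 * ‖Complex.exp (2 * Real.pi * z) - 1‖
      ≤ ‖z‖ * ‖1 + z ^ 2‖ * (Real.exp (2 * Real.pi) - 1) := by
  have h := sinh_bd z hz
  have e1 : Complex.exp (2 * Real.pi * z) - 1
      = 2 * (Complex.exp (Real.pi * z) * Complex.sinh (Real.pi * z)) := by
    rw [Complex.sinh]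
    have a : Complex.exp (2 * Real.pi * z) = Complex.exp (Real.pi * z) * Complex.exp (Real.pi * z) := by
      rw [← Complex.exp_add]; congr 1; ring
    have b : Complex.exp (Real.pi * z) * Complex.exp (-(Real.pi * z)) = 1 := by
      rw [← Complex.exp_add]; simp
    rw [a]; linear_combination b
  have e2 : Real.exp (2 * Real.pi) - 1 = 2 * (Real.exp Real.pi * Real.sinh Real.pi) := by
    rw [Real.sinh_eq]
    have a : Real.exp (2 * Real.pi) = Real.exp Real.pi * Real.exp Real.pi := by
      rw [← Real.exp_add]; congr 1; ring
    have b : Real.exp Real.pi * Real.exp (-Real.pi) = 1 := by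
      rw [← Real.exp_add]; simp
    rw [a]; linear_combination b
  have e3 : ‖Complex.exp (Real.pi * z)‖ ≤ Real.exp Real.pi := by
    rw [Complex.norm_exp]
    apply Real.exp_le_exp.2
    rw [Complex.re_ofReal_mul]
    have := (Complex.re_le_norm z).trans hz
    nlinarith [Real.pi_pos]
  rw [e1, e2, norm_mul, norm_mul]
  have : ‖(2 : ℂ)‖ = 2 := by norm_num
  rw [this]
  calc _ = 2 * (‖Complex.exp (Real.pi * z)‖ * (2 * ‖Complex.sinh (Real.pi * z)‖)) := by ring
    _ ≤ 2 * (Real.exp Real.pi * (‖z‖ * ‖1 + z ^ 2‖ * Real.sinh Real.pi)) := by gcongr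
    _ = _ := by ring

lemma exp_2pi : Real.exp (2 * Real.pi) ≤ 666 := by
  have h1 : Real.exp (2 * Real.pi) ≤ Real.exp (13 / 2) :=
    Real.exp_le_exp.2 (by linarith [Real.pi_lt_d6])
  have h2 : Real.exp (13 / 2) ^ 2 = Real.exp 1 ^ 13 := by
    rw [← Real.exp_nat_mul, ← Real.exp_nat_mul]; norm_num
  have h3 : Real.exp 1 ^ 13 ≤ 2.7182818286 ^ 13 := by
    gcongr; exact Real.exp_one_lt_d9.le
  have h4 : Real.exp (13 / 2) ≤ 666 := by
    apply le_of_sq_le_sq _ (by norm_num)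
    rw [h2]; exact h3.trans (by norm_num)
  exact h1.trans h4

lemma be_even (j : ℕ) : (_root_.bernoulli (2 * j) : ℝ) / (2 * j).factorial * (2 * Real.pi) ^ (2 * j)
    = -2 * ((-1) ^ j * (1 + ua j)) := by
  rw [ua]
  have : ((-1 : ℝ) ^ j) * (-1) ^ j = 1 := by rw [← mul_pow]; norm_num
  rw [pow_succ]
  linear_combination (-((_root_.bernoulli (2 * j) : ℝ) / (2 * j).factorial * (2 * Real.pi) ^ (2 * j))) * this

lemma ua_abs_le (j : ℕ) : |ua j| ≤ 2 := by
  rcases Nat.lt_or_ge j 2 with h | h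
  · interval_cases j
    · rw [ua_abs_zero]; norm_num
    · linarith [ua_one]
  · refine (ua_abs j h).trans ?_
    have : (1 / 4 : ℝ) ^ j ≤ 1 := pow_le_one₀ (by norm_num) (by norm_num)
    linarith

lemma ua_summable (z : ℂ) (hz : ‖z‖ < 1) :
    Summable (fun j : ℕ => (-1 : ℂ) ^ j * (ua j : ℂ) * z ^ (2 * j)) := by
  have hz2 : ‖z‖ ^ 2 < 1 := by nlinarith [norm_nonneg z]
  apply Summable.of_norm_bounded (g := fun j => 2 * (‖z‖ ^ 2) ^ j)
  · exact (summable_geometric_of_lt_one (by positivity) hz2).mul_left 2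
  · intro j
    rw [norm_mul, norm_mul, norm_pow, norm_pow, norm_neg, norm_one, one_pow, one_mul,
      Complex.norm_real, Real.norm_eq_abs, pow_mul]
    gcongr
    exact ua_abs_le j

lemma HasSum_cf {E : Type*} [AddCommMonoid E] [TopologicalSpace E] {f g : ℕ → E} {a : E}
    (h : HasSum f a) (e : ∀ n, g n = f n) : HasSum g a := by
  rw [show g = f from funext e]; exact h

lemma geom_alt (z : ℂ) (hz : ‖z‖ < 1) :
    HasSum (fun j : ℕ => (-1 : ℂ) ^ j * z ^ (2 * j)) (1 + z ^ 2)⁻¹ := by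
  have hz2 : ‖-z ^ 2‖ < 1 := by rw [norm_neg, norm_pow]; nlinarith [norm_nonneg z]
  have := hasSum_geometric_of_norm_lt_one hz2
  rw [sub_neg_eq_add] at this
  have e : (fun j : ℕ => (-1 : ℂ) ^ j * z ^ (2 * j)) = fun j : ℕ => (-z ^ 2) ^ j := by
    funext j
    rw [neg_pow (z ^ 2), pow_mul]
  rw [e]
  exact this

lemma gen_hasSum (z : ℂ) (hz : ‖z‖ < 1) :
    HasSum (fun n : ℕ => PowerSeries.coeff n (bernoulliPowerSeries ℂ) * (2 * Real.pi * z) ^ n)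
      (-2 * ((1 + z ^ 2)⁻¹ + ∑' j : ℕ, (-1 : ℂ) ^ j * (ua j : ℂ) * z ^ (2 * j)) - Real.pi * z) := by
  rw [sub_eq_add_neg]
  apply HasSum.even_add_odd
  · have := ((geom_alt z hz).add (ua_summable z hz).hasSum).mul_left (-2)
    refine HasSum_cf this (fun j => ?_)
    have h := congrArg Complex.ofReal (be_even j)
    push_cast at h
    simp only [bernoulliPowerSeries, PowerSeries.coeff_mk, map_div₀, map_natCast, eq_ratCast,
      Rat.cast_div, Rat.cast_natCast]
    rw [mul_pow]
    linear_combination z ^ (2 * j) * h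
  · have h0 : (fun k : ℕ => PowerSeries.coeff (2 * k + 1) (bernoulliPowerSeries ℂ) *
        (2 * Real.pi * z) ^ (2 * k + 1)) = fun k => if k = 0 then -(Real.pi * z) else 0 := by
      funext k
      split_ifs with hk
      · subst hk
        simp [bernoulliPowerSeries]
        ring
      · have : _root_.bernoulli (2 * k + 1) = 0 :=
          bernoulli_eq_zero_of_odd ⟨k, rfl⟩ (by omega)
        simp [bernoulliPowerSeries, this]
    rw [h0]
    exact hasSum_ite_eq 0 _

lemma gen_summable_norm (z : ℂ) (hz : ‖z‖ < 1) :
    Summable (fun n : ℕ =>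
      ‖PowerSeries.coeff n (bernoulliPowerSeries ℂ) * (2 * Real.pi * z) ^ n‖) :=
  (gen_hasSum z hz).summable.norm

lemma gen_mul (z : ℂ) (hz : ‖z‖ < 1) :
    (-2 * ((1 + z ^ 2)⁻¹ + ∑' j : ℕ, (-1 : ℂ) ^ j * (ua j : ℂ) * z ^ (2 * j)) - Real.pi * z)
      * (Complex.exp (2 * Real.pi * z) - 1) = 2 * Real.pi * z := by
  set t : ℂ := 2 * Real.pi * z with ht
  have hE : HasSum (fun n : ℕ => PowerSeries.coeff n (PowerSeries.exp ℂ - 1) * t ^ n)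
      (Complex.exp t - 1) := by
    have h1 := NormedSpace.expSeries_div_hasSum_exp t
    rw [← Complex.exp_eq_exp_ℂ] at h1
    have h2 := h1.sub (hasSum_ite_eq (0 : ℕ) (1 : ℂ))
    refine HasSum_cf h2 (fun n => ?_)
    rw [map_sub, PowerSeries.coeff_exp, PowerSeries.coeff_one]
    by_cases hn : n = 0
    · subst hn; simp
    · simp [hn]; ring
  have hB := gen_hasSum z hz
  rw [← ht] at hB
  rw [← hB.tsum_eq, ← hE.tsum_eq, tsum_mul_tsum_eq_tsum_sum_antidiagonal_of_summable_norm
    hB.summable.norm hE.summable.norm]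
  have : ∀ n : ℕ, ∑ kl ∈ Finset.HasAntidiagonal.antidiagonal n,
      PowerSeries.coeff kl.1 (bernoulliPowerSeries ℂ) * t ^ kl.1 *
        (PowerSeries.coeff kl.2 (PowerSeries.exp ℂ - 1) * t ^ kl.2)
      = if n = 1 then t else 0 := by
    intro n
    have h := congrArg (PowerSeries.coeff n) (bernoulliPowerSeries_mul_exp_sub_one ℂ)
    rw [PowerSeries.coeff_mul, PowerSeries.coeff_X] at h
    have h2 : ∑ kl ∈ Finset.HasAntidiagonal.antidiagonal n,
      PowerSeries.coeff kl.1 (bernoulliPowerSeries ℂ) * t ^ kl.1 *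
        (PowerSeries.coeff kl.2 (PowerSeries.exp ℂ - 1) * t ^ kl.2)
      = (∑ kl ∈ Finset.HasAntidiagonal.antidiagonal n, PowerSeries.coeff kl.1 (bernoulliPowerSeries ℂ) *
        PowerSeries.coeff kl.2 (PowerSeries.exp ℂ - 1)) * t ^ n := by
      rw [Finset.sum_mul]
      apply Finset.sum_congr rfl
      intro kl hkl
      rw [← Finset.HasAntidiagonal.mem_antidiagonal.1 hkl, pow_add]; ring
    rw [h2, h]
    split_ifs with hn
    · rw [hn]; ring
    · ring
  rw [tsum_congr this]
  exact tsum_ite_eq 1 _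

noncomputable def Hf (z : ℂ) : ℂ :=
  1 + (1 + z ^ 2) * ((∑' j : ℕ, (-1 : ℂ) ^ j * (ua j : ℂ) * z ^ (2 * j)) + Real.pi / 2 * z)

lemma Hf_lower (z : ℂ) (hz : ‖z‖ < 1) (hz0 : z ≠ 0) : 0.009 ≤ ‖Hf z‖ := by
  have h1 := gen_mul z hz
  have hne : (1 + z ^ 2) ≠ 0 := by
    intro h
    have : z ^ 2 = -1 := by linear_combination h
    have h2 := congrArg norm this
    rw [norm_pow, norm_neg, norm_one] at h2
    nlinarith [norm_nonneg z]
  have h2 : Hf z * (Complex.exp (2 * Real.pi * z) - 1) = -(Real.pi * z * (1 + z ^ 2)) := by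
    have : Hf z = -(1 + z ^ 2) / 2 * (-2 * ((1 + z ^ 2)⁻¹ + ∑' j : ℕ, (-1 : ℂ) ^ j * (ua j : ℂ) * z ^ (2 * j)) - Real.pi * z) := by
      rw [Hf]; field_simp; ring
    rw [this, mul_assoc, h1]; ring
  have h3 := congrArg norm h2
  rw [norm_mul, norm_neg, norm_mul, norm_mul, Complex.norm_real, Real.norm_eq_abs,
    abs_of_pos Real.pi_pos] at h3
  have h4 := exp_bd z hz.le
  have h5 := exp_2pi
  have hp : 0 < ‖z‖ * ‖1 + z ^ 2‖ := mul_pos (norm_pos_iff.2 hz0) (norm_pos_iff.2 hne)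
  by_contra hcon
  push Not at hcon
  have h6 := Real.pi_gt_d6
  have h7 : ‖Hf z‖ * (2 * ‖Complex.exp (2 * Real.pi * z) - 1‖)
      ≤ 0.009 * (‖z‖ * ‖1 + z ^ 2‖ * 665) := by
    apply mul_le_mul hcon.le _ (by positivity) (by norm_num)
    refine h4.trans ?_
    gcongr
    linarith
  nlinarith

noncomputable def hpoly (k : ℕ) : ℂ[X] :=
  1 + (1 + X ^ 2) * (∑ j ∈ Finset.range (k + 1),
    C ((-1 : ℂ) ^ j * (((ua j + ua j * ua (k - j) / 2 : ℝ)) : ℂ)) * X ^ (2 * j)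
    + C ((Real.pi / 2 * zetaVal (2 * k - 1) : ℝ) : ℂ) * X)

lemma hpoly_eval (k : ℕ) (z : ℂ) : (hpoly k).eval z =
    1 + (1 + z ^ 2) * (∑ j ∈ Finset.range (k + 1),
      ((-1 : ℂ) ^ j * (((ua j + ua j * ua (k - j) / 2 : ℝ)) : ℂ)) * z ^ (2 * j)
    + ((Real.pi / 2 * zetaVal (2 * k - 1) : ℝ) : ℂ) * z) := by
  simp only [hpoly, eval_add, eval_mul, eval_one, eval_pow, eval_X, eval_C, eval_finsetSum]

lemma hpoly_natDegree (k : ℕ) (hk : 2 ≤ k) : (hpoly k).natDegree ≤ 2 * k + 2 := by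
  unfold hpoly
  apply natDegree_add_le_of_degree_le
  · simp
  · rw [add_comm (2 * k)]
    apply natDegree_mul_le_of_le
    · apply natDegree_add_le_of_degree_le
      · simp
      · simp
    · apply natDegree_add_le_of_degree_le
      · apply natDegree_sum_le_of_forall_le
        intro j hj
        have := Finset.mem_range.1 hj
        exact (natDegree_C_mul_X_pow_le _ _).trans (by omega)
      · exact (natDegree_C_mul_le _ _).trans (by rw [natDegree_X]; omega)

lemma pow_bd (k : ℕ) (hk : 6 ≤ k) :
    (20.1 + 1.75 * ((k : ℝ) - 3)) * (1 / 4) ^ k ≤ 0.0075 := by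
  induction k, hk using Nat.le_induction with
  | base => norm_num
  | succ n hn ih =>
    have h6 : (6 : ℝ) ≤ n := by exact_mod_cast hn
    have hp : (0 : ℝ) < (1 / 4) ^ n := by positivity
    rw [pow_succ]
    push_cast
    nlinarith

lemma tail_bd (k : ℕ) (hk : 6 ≤ k) (z : ℂ) (hz : ‖z‖ < 1) :
    ‖∑' j : ℕ, (-1 : ℂ) ^ (j + (k + 1)) * (ua (j + (k + 1)) : ℂ) * z ^ (2 * (j + (k + 1)))‖
      ≤ 0.44 * (1 / 4) ^ k := by
  have hg : HasSum (fun j : ℕ => 1.32 * (1 / 4 : ℝ) ^ (j + (k + 1))) (0.44 * (1 / 4) ^ k) := by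
    have := (hasSum_geometric_of_lt_one (r := (1 / 4 : ℝ)) (by norm_num) (by norm_num)).mul_left
      (1.32 * (1 / 4) ^ (k + 1))
    have e : (0.44 : ℝ) * (1 / 4) ^ k = 1.32 * (1 / 4) ^ (k + 1) * (1 - 1 / 4)⁻¹ := by
      rw [pow_succ]; ring
    rw [e]
    refine HasSum_cf this (fun j => ?_)
    rw [pow_add]; ring
  refine tsum_of_norm_bounded hg ?_
  intro j
  rw [norm_mul, norm_mul, norm_pow, norm_pow, norm_neg, norm_one, one_pow, one_mul,
      Complex.norm_real, Real.norm_eq_abs]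
  have h1 := ua_abs (j + (k + 1)) (by omega)
  have h2 : ‖z‖ ^ (2 * (j + (k + 1))) ≤ 1 := pow_le_one₀ (norm_nonneg _) hz.le
  calc _ ≤ |ua (j + (k + 1))| * 1 := by gcongr
    _ ≤ _ := by linarith

lemma hpoly_lower (k : ℕ) (hk : 6 ≤ k) (z : ℂ) (hz : ‖z‖ < 1) (hz0 : z ≠ 0) :
    0.001 ≤ ‖(hpoly k).eval z‖ := by
  have hH := Hf_lower z hz hz0
  have hs := (ua_summable z hz).sum_add_tsum_nat_add (k + 1)
  set t := ∑' j : ℕ, (-1 : ℂ) ^ (j + (k + 1)) * (ua (j + (k + 1)) : ℂ) * z ^ (2 * (j + (k + 1)))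
    with htdef
  have ht : ‖t‖ ≤ 0.44 * (1 / 4) ^ k := tail_bd k hk z hz
  set s := ∑ j ∈ Finset.range (k + 1), (-1 : ℂ) ^ j * ((ua j * ua (k - j) : ℝ) : ℂ) * z ^ (2 * j)
    with hsdef
  have hsb : ‖s‖ ≤ (10.8 + 1.75 * ((k : ℝ) - 3)) * (1 / 4) ^ k := by
    refine le_trans ?_ (ua_sum k hk)
    refine (norm_sum_le _ _).trans (Finset.sum_le_sum fun j _ => ?_)
    rw [norm_mul, norm_mul, norm_pow, norm_pow, norm_neg, norm_one, one_pow, one_mul,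
      Complex.norm_real, Real.norm_eq_abs]
    have h2 : ‖z‖ ^ (2 * j) ≤ 1 := pow_le_one₀ (norm_nonneg _) hz.le
    calc _ ≤ |ua j * ua (k - j)| * 1 := by gcongr
      _ = _ := mul_one _
  have hzeta := zv_sub_one (2 * k - 1) (by omega)
  have hzeta0 := zv_one_le (2 * k - 1) (by omega)
  have hpw : (1 / 2 : ℝ) ^ (2 * k - 1) = 2 * (1 / 4) ^ k := by
    have : (1 / 4 : ℝ) ^ k = (1 / 2) ^ (2 * k - 1) * (1 / 2) := by
      rw [← pow_succ, Nat.sub_add_cancel (by omega), pow_mul]; norm_num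
    rw [this]; ring
  rw [hpw] at hzeta
  have hdiff : (hpoly k).eval z = Hf z + (1 + z ^ 2) *
      (s / 2 + ((Real.pi / 2 * (zetaVal (2 * k - 1) - 1) : ℝ) : ℂ) * z - t) := by
    rw [hpoly_eval, Hf, ← hs, hsdef]
    have : ∑ j ∈ Finset.range (k + 1),
      ((-1 : ℂ) ^ j * (((ua j + ua j * ua (k - j) / 2 : ℝ)) : ℂ)) * z ^ (2 * j)
      = ∑ j ∈ Finset.range (k + 1), (-1 : ℂ) ^ j * (ua j : ℂ) * z ^ (2 * j)
       + (∑ j ∈ Finset.range (k + 1), (-1 : ℂ) ^ j * ((ua j * ua (k - j) : ℝ) : ℂ) * z ^ (2 * j)) / 2 := by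
      rw [Finset.sum_div, ← Finset.sum_add_distrib]
      apply Finset.sum_congr rfl
      intro j _
      push_cast; ring
    rw [this]
    push_cast
    ring
  have hb1 : ‖1 + z ^ 2‖ ≤ 2 := by
    refine (norm_add_le _ _).trans ?_
    rw [norm_one, norm_pow]
    nlinarith [norm_nonneg z]
  have hb2 : ‖((Real.pi / 2 * (zetaVal (2 * k - 1) - 1) : ℝ) : ℂ) * z‖ ≤ 4.2 * (1 / 4) ^ k := by
    rw [norm_mul, Complex.norm_real, Real.norm_eq_abs,
      abs_of_nonneg (mul_nonneg (by positivity) (by linarith))]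
    have hpi := Real.pi_lt_d6
    have hq : (0 : ℝ) < (1 / 4) ^ k := by positivity
    calc _ ≤ (Real.pi / 2 * (zetaVal (2 * k - 1) - 1)) * 1 := by
          gcongr
      _ ≤ 3.141593 / 2 * (1.32 * (2 * (1 / 4) ^ k)) * 1 := by
          gcongr
      _ ≤ _ := by nlinarith
  have hb3 : ‖s / 2 + ((Real.pi / 2 * (zetaVal (2 * k - 1) - 1) : ℝ) : ℂ) * z - t‖
      ≤ (10.8 + 1.75 * ((k : ℝ) - 3)) * (1 / 4) ^ k / 2 + 4.2 * (1 / 4) ^ k + 0.44 * (1 / 4) ^ k := by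
    refine (norm_sub_le _ _).trans ?_
    refine add_le_add ((norm_add_le _ _).trans (add_le_add ?_ ?_)) ht
    · rw [norm_div]; norm_num at hsb ⊢; linarith
    · exact hb2
  have hb4 : ‖(1 + z ^ 2) *
      (s / 2 + ((Real.pi / 2 * (zetaVal (2 * k - 1) - 1) : ℝ) : ℂ) * z - t)‖ ≤ 0.0075 := by
    rw [norm_mul]
    refine (mul_le_mul hb1 hb3 (norm_nonneg _) (by norm_num)).trans ?_
    have hpb := pow_bd k hk
    have hq : (0 : ℝ) < (1 / 4) ^ k := by positivity
    nlinarith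
  rw [hdiff]
  have := norm_sub_le (Hf z + (1 + z ^ 2) *
      (s / 2 + ((Real.pi / 2 * (zetaVal (2 * k - 1) - 1) : ℝ) : ℂ) * z - t)) ((1 + z ^ 2) *
      (s / 2 + ((Real.pi / 2 * (zetaVal (2 * k - 1) - 1) : ℝ) : ℂ) * z - t))
  rw [add_sub_cancel_right] at this
  linarith

lemma hpoly_ne (k : ℕ) (hk : 6 ≤ k) (z : ℂ) (hz : ‖z‖ ≤ 1) : (hpoly k).eval z ≠ 0 := by
  have hcl : IsClosed {w : ℂ | 0.001 ≤ ‖(hpoly k).eval w‖} :=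
    isClosed_le continuous_const (hpoly k).continuous.norm
  have h1 : Metric.ball (0 : ℂ) 1 ∩ {0}ᶜ ⊆ {w : ℂ | 0.001 ≤ ‖(hpoly k).eval w‖} := by
    intro w hw
    exact hpoly_lower k hk w (by simpa using hw.1) (by simpa using hw.2)
  have h2 : Metric.ball (0 : ℂ) 1 ⊆ closure (Metric.ball (0 : ℂ) 1 ∩ {0}ᶜ) :=
    (dense_compl_singleton (0 : ℂ)).open_subset_closure_inter Metric.isOpen_ball
  have h3 := h2.trans (closure_minimal h1 hcl)
  have h4 := closure_minimal h3 hcl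
  rw [closure_ball (0 : ℂ) one_ne_zero] at h4
  have h5 : (0.001 : ℝ) ≤ ‖(hpoly k).eval z‖ := h4 (by simpa using hz)
  intro h0
  rw [h0, norm_zero] at h5
  norm_num at h5

lemma hpoly_conj (k : ℕ) (z : ℂ) :
    (hpoly k).eval (starRingEnd ℂ z) = starRingEnd ℂ ((hpoly k).eval z) := by
  rw [hpoly_eval, hpoly_eval]
  simp only [map_add, map_mul, map_one, map_pow, map_sum, Complex.conj_ofReal, map_neg]

lemma Ppoly_eval_ua (k : ℕ) (hk : 2 ≤ k) (z : ℂ) :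
    (-1 : ℂ) ^ k * (Real.pi / 2) * (Ppoly k).eval z =
    ∑ j ∈ Finset.range (k + 1), (-1 : ℂ) ^ j * ((1 + ua j) * (1 + ua (k - j))) * z ^ (2 * j)
    + Real.pi / 2 * zetaVal (2 * k - 1) * (z + (-1) ^ k * z ^ (2 * k - 1)) := by
  rw [Ppoly_eval, mul_add]
  have hkk : (-1 : ℂ) ^ k * (-1) ^ k = 1 := by rw [← mul_pow]; norm_num
  congr 1
  · rw [Finset.mul_sum, Finset.mul_sum]
    apply Finset.sum_congr rfl
    intro j hj
    have hjk : j ≤ k := by have := Finset.mem_range.1 hj; omega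
    have h1 := congrArg Complex.ofReal (be_even j)
    have h2 := congrArg Complex.ofReal (be_even (k - j))
    push_cast at h1 h2
    have hch : ((Nat.choose (2 * k) (2 * j) : ℕ) : ℂ)
        = (2 * k).factorial / ((2 * j).factorial * (2 * (k - j)).factorial) := by
      rw [Nat.cast_choose ℂ (by omega)]
      congr 3
      rw [Nat.mul_sub]
    rw [hch, ← Nat.mul_sub]
    have hpi : (Real.pi : ℂ) ≠ 0 := by exact_mod_cast Real.pi_ne_zero
    have hpw : (2 * Real.pi : ℂ) ^ (2 * k - 1) * (2 * Real.pi)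
        = (2 * Real.pi) ^ (2 * j) * (2 * Real.pi) ^ (2 * (k - j)) := by
      rw [← pow_succ, ← pow_add]; congr 1; omega
    have hf1 : ((2 * k).factorial : ℂ) ≠ 0 := by exact_mod_cast Nat.factorial_ne_zero _
    have hf2 : ((2 * j).factorial : ℂ) ≠ 0 := by exact_mod_cast Nat.factorial_ne_zero _
    have hf3 : ((2 * (k - j)).factorial : ℂ) ≠ 0 := by exact_mod_cast Nat.factorial_ne_zero _
    have hsg : (-1 : ℂ) ^ k = (-1) ^ j * (-1) ^ (k - j) := by
      rw [← pow_add]; congr 1; omega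
    have hs1 : (-1 : ℂ) ^ j * (-1) ^ j = 1 := by rw [← mul_pow]; norm_num
    have hs2 : (-1 : ℂ) ^ (k - j) * (-1) ^ (k - j) = 1 := by rw [← mul_pow]; norm_num
    push_cast
    calc _ = (1 / 4) * (-1 : ℂ) ^ k * (-1) ^ j * z ^ (2 * j) *
          ((2 * Real.pi : ℂ) ^ (2 * k - 1) * (2 * Real.pi)) *
          ((_root_.bernoulli (2 * j) : ℂ) / (2 * j).factorial) *
          ((_root_.bernoulli (2 * (k - j)) : ℂ) / (2 * (k - j)).factorial) := by
          field_simp; ring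
      _ = (1 / 4) * (-1 : ℂ) ^ k * (-1) ^ j * z ^ (2 * j) *
          ((_root_.bernoulli (2 * j) : ℂ) / (2 * j).factorial * (2 * Real.pi) ^ (2 * j)) *
          ((_root_.bernoulli (2 * (k - j)) : ℂ) / (2 * (k - j)).factorial *
            (2 * Real.pi) ^ (2 * (k - j))) := by rw [hpw]; ring
      _ = _ := by
          rw [h1, h2, hsg]
          linear_combination (-1 : ℂ) ^ j * ((1 + ua j) * (1 + ua (k - j))) * z ^ (2 * j) *
            (hs1 * ((-1 : ℂ) ^ (k - j) * (-1) ^ (k - j)) + hs2)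
  · linear_combination (Real.pi / 2 * zetaVal (2 * k - 1) * z : ℂ) * hkk

noncomputable def fpoly (k : ℕ) : ℂ[X] := (1 + X ^ 2) * C ((-1 : ℂ) ^ k * (Real.pi / 2)) * Ppoly k

lemma fpoly_eval (k : ℕ) (z : ℂ) : (fpoly k).eval z =
    (1 + z ^ 2) * ((-1 : ℂ) ^ k * (Real.pi / 2) * (Ppoly k).eval z) := by
  simp only [fpoly, eval_mul, eval_add, eval_one, eval_pow, eval_X, eval_C]
  ring

lemma geom_fin (k : ℕ) (z : ℂ) :
    (1 + z ^ 2) * ∑ j ∈ Finset.range (k + 1), (-1 : ℂ) ^ j * z ^ (2 * j)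
      = 1 + (-1) ^ k * z ^ (2 * k + 2) := by
  induction k with
  | zero => simp
  | succ n ih =>
    rw [Finset.sum_range_succ, mul_add, ih, pow_succ]
    ring

lemma fpoly_decomp (k : ℕ) (hk : 2 ≤ k) (z : ℂ) (hz : z ≠ 0) : (fpoly k).eval z =
    (hpoly k).eval z + (-1) ^ k * z ^ (2 * k + 2) * (hpoly k).eval z⁻¹ := by
  rw [fpoly_eval, Ppoly_eval_ua k hk, hpoly_eval, hpoly_eval]
  have hrefl : (-1 : ℂ) ^ k * z ^ (2 * k) * ∑ j ∈ Finset.range (k + 1),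
      ((-1 : ℂ) ^ j * (((ua j + ua j * ua (k - j) / 2 : ℝ)) : ℂ)) * z⁻¹ ^ (2 * j)
      = ∑ j ∈ Finset.range (k + 1),
      ((-1 : ℂ) ^ j * (((ua (k - j) + ua j * ua (k - j) / 2 : ℝ)) : ℂ)) * z ^ (2 * j) := by
    rw [← Finset.sum_range_reflect, Finset.mul_sum]
    apply Finset.sum_congr rfl
    intro j hj
    have hjk : j ≤ k := by have := Finset.mem_range.1 hj; omega
    have a1 : k + 1 - 1 - j = k - j := by omega
    have a2 : k - (k - j) = j := by omega
    rw [a1, a2]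
    have hzz : z ^ (2 * k) = z ^ (2 * j) * z ^ (2 * (k - j)) := by
      rw [← pow_add]; congr 1; omega
    have hsg : (-1 : ℂ) ^ k = (-1) ^ j * (-1) ^ (k - j) := by
      rw [← pow_add]; congr 1; omega
    have hs2 : (-1 : ℂ) ^ (k - j) * (-1) ^ (k - j) = 1 := by rw [← mul_pow]; norm_num
    have hzi : z ^ (2 * (k - j)) * z⁻¹ ^ (2 * (k - j)) = 1 := by
      rw [← mul_pow, mul_inv_cancel₀ hz, one_pow]
    rw [hzz, hsg]
    push_cast
    linear_combination ((-1 : ℂ) ^ j * z ^ (2 * j) * (ua (k - j) + ua j * ua (k - j) / 2)) *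
      (hs2 * (z ^ (2 * (k - j)) * z⁻¹ ^ (2 * (k - j))) + hzi)
  have hsum : ∑ j ∈ Finset.range (k + 1), (-1 : ℂ) ^ j * ((1 + ua j) * (1 + ua (k - j))) * z ^ (2 * j)
      = ∑ j ∈ Finset.range (k + 1), (-1 : ℂ) ^ j * z ^ (2 * j)
      + ∑ j ∈ Finset.range (k + 1),
      ((-1 : ℂ) ^ j * (((ua j + ua j * ua (k - j) / 2 : ℝ)) : ℂ)) * z ^ (2 * j)
      + ∑ j ∈ Finset.range (k + 1),
      ((-1 : ℂ) ^ j * (((ua (k - j) + ua j * ua (k - j) / 2 : ℝ)) : ℂ)) * z ^ (2 * j) := by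
    rw [← Finset.sum_add_distrib, ← Finset.sum_add_distrib]
    apply Finset.sum_congr rfl
    intro j _
    push_cast; ring
  have hg := geom_fin k z
  rw [hsum, ← hrefl]
  generalize (∑ j ∈ Finset.range (k + 1), (-1 : ℂ) ^ j * z ^ (2 * j)) = S0 at *
  generalize (∑ j ∈ Finset.range (k + 1),
      ((-1 : ℂ) ^ j * (((ua j + ua j * ua (k - j) / 2 : ℝ)) : ℂ)) * z ^ (2 * j)) = S1 at *
  generalize (∑ j ∈ Finset.range (k + 1),
      ((-1 : ℂ) ^ j * (((ua j + ua j * ua (k - j) / 2 : ℝ)) : ℂ)) * z⁻¹ ^ (2 * j)) = S2 at *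
  have hz1 : z ^ (2 * k + 2) * (1 + z⁻¹ ^ 2) = (1 + z ^ 2) * z ^ (2 * k) := by
    rw [pow_add]; field_simp; ring
  have hz2 : z ^ (2 * k) * z⁻¹ = z ^ (2 * k - 1) := by
    have : z ^ (2 * k) = z ^ (2 * k - 1) * z := by
      rw [← pow_succ, Nat.sub_add_cancel (by omega)]
    rw [this, mul_assoc, mul_inv_cancel₀ hz, mul_one]
  push_cast
  linear_combination hg - (-1) ^ k * (S2 + Real.pi / 2 * zetaVal (2 * k - 1) * z⁻¹) * hz1
    - (1 + z ^ 2) * (-1) ^ k * (Real.pi / 2 * zetaVal (2 * k - 1)) * hz2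

lemma fpoly_zero (k : ℕ) (hk : 2 ≤ k) : (fpoly k).eval 0 ≠ 0 := by
  rw [fpoly_eval, Ppoly_eval_ua k hk, Finset.sum_range_succ']
  have h1 : 2 * k - 1 ≠ 0 := by omega
  have h2 := ua_nonneg k (by omega)
  have h3 : (1 + (ua k : ℂ)) ≠ 0 := by
    have : (1 + ua k : ℝ) ≠ 0 := by linarith
    exact_mod_cast this
  have h4 : (1 + (-3 / 2 : ℂ)) ≠ 0 := by norm_num
  simp [h1, ua_zero, h3, h4]

lemma large (k : ℕ) (hk : 6 ≤ k) (z : ℂ) (hz : (Ppoly k).IsRoot z) :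
    ‖z‖ = 1 ∧ (Ppoly k).rootMultiplicity z = 1 := by
  have hf0 := fpoly_zero k (by omega)
  have hfr : (fpoly k).IsRoot z := by
    have : (Ppoly k).eval z = 0 := hz
    rw [IsRoot, fpoly_eval, this]; ring
  obtain ⟨h1, h2⟩ := si_main (hpoly k) (fpoly k) (2 * k + 2) (by omega)
    (hpoly_natDegree k (by omega)) (hpoly_ne k hk) (hpoly_conj k) ((-1) ^ k) (by simp)
    (fpoly_decomp k (by omega)) hf0 z hfr
  refine ⟨h1, ?_⟩
  have hfne : fpoly k ≠ 0 := by intro h; rw [h] at hf0; simp at hf0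
  have hle := rootMultiplicity_le_rootMultiplicity_of_dvd hfne (Dvd.intro_left _ rfl : Ppoly k ∣ fpoly k) z
  have hPne : Ppoly k ≠ 0 := by
    intro h; apply hfne; rw [fpoly, h, mul_zero]
  have hpos := (rootMultiplicity_pos hPne).2 hz
  omega
end Analytic

/-- For `2 ≤ k < 1000`, every complex root of `P_k` lies on the unit circle,
and all roots of `P_k` are simple. -/
theorem Ppoly_roots_on_unit_circle_and_simple (k : ℕ) (hk : 2 ≤ k) (hk' : k < 1000) :
    ∀ z : ℂ, (Ppoly k).IsRoot z →
      ‖z‖ = 1 ∧ Polynomial.rootMultiplicity z (Ppoly k) = 1 := by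
  intro z hz
  rcases Nat.lt_or_ge k 6 with h | h
  · interval_cases k
    · exact case2 z hz
    · exact case3 z hz
    · exact case4 z hz
    · exact case5 z hz
  · exact large k h z hz
end

section
/- For every integer k ≥ 0, ∑_{j=0}^{k} C(2k,2j) E_{2j} E_{2k−2j} = 2^{2k+1}(2^{2k+2}−1) B_{2k+2}/(k+1). (For example, for k = 1 both sides equal −2.) -/
/-- Auxiliary: `eulerEvenAux m` is the Euler number `E_{2m}`, defined via the
recurrence `∑_{j=0}^{n} C(2n,2j) E_{2j} = 0` for `n ≥ 1`, with `E_0 = 1`. -/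
def eulerEvenAux : ℕ → ℚ
  | 0 => 1
  | m + 1 => -∑ j ∈ (Finset.range (m + 1)).attach,
      ((Nat.choose (2 * (m + 1)) (2 * (j : ℕ))) : ℚ) * eulerEvenAux j
decreasing_by exact Finset.mem_range.mp j.2

/-- The Euler numbers: `E_0 = 1`, `E_n = 0` for odd `n`, and
`∑_{j=0}^{n} C(2n,2j) E_{2j} = 0` for every `n ≥ 1`. -/
def eulerE (n : ℕ) : ℚ := if n % 2 = 1 then 0 else eulerEvenAux (n / 2)

open PowerSeries in
lemma aux_sum_even (g : ℕ → ℚ) (hg : ∀ i, i % 2 = 1 → g i = 0) (m : ℕ) :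
    ∑ i ∈ Finset.range (2 * m + 1), g i = ∑ j ∈ Finset.range (m + 1), g (2 * j) := by
  induction m with
  | zero => simp
  | succ m ih =>
    rw [show 2 * (m + 1) + 1 = (2 * m + 1) + 1 + 1 by ring, Finset.sum_range_succ,
      Finset.sum_range_succ, ih, Finset.sum_range_succ _ (m + 1), hg (2 * m + 1) (by omega)]
    ring_nf

lemma aux_rec (m : ℕ) :
    ∑ j ∈ Finset.range (m + 1 + 1), ((2 * (m + 1)).choose (2 * j) : ℚ) * eulerE (2 * j) = 0 := by
  have h : ∀ j, eulerE (2 * j) = eulerEvenAux j := by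
    intro j
    simp [eulerE]
  simp only [h]
  rw [Finset.sum_range_succ, Nat.choose_self]
  have h2 : eulerEvenAux (m + 1) = -∑ j ∈ (Finset.range (m + 1)).attach,
      ((Nat.choose (2 * (m + 1)) (2 * (j : ℕ))) : ℚ) * eulerEvenAux j := by
    rw [eulerEvenAux]
  rw [h2]
  rw [Finset.sum_attach (Finset.range (m + 1))
    (fun j => ((2 * (m + 1)).choose (2 * j) : ℚ) * eulerEvenAux j)]
  simp

lemma aux_odd (n : ℕ) (h : n % 2 = 1) : eulerE n = 0 := by simp [eulerE, h]

noncomputable def auxF : PowerSeries ℚ := PowerSeries.mk fun n => eulerE n / n.factorial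

open PowerSeries in
lemma aux_F_mul : auxF * (exp ℚ + evalNegHom (exp ℚ)) = 2 := by
  have h2 : (2 : PowerSeries ℚ) = C (2 : ℚ) := (map_ofNat C 2).symm
  rw [h2]
  ext n
  rw [coeff_mul, Finset.Nat.sum_antidiagonal_eq_sum_range_succ_mk, coeff_C]
  simp only [auxF, coeff_mk, map_add, evalNegHom, coeff_rescale, coeff_exp, Algebra.algebraMap_self,
    RingHom.id_apply]
  rcases Nat.even_or_odd' n with ⟨m, rfl | rfl⟩
  · rw [Nat.succ_eq_add_one, aux_sum_even _ (fun i hi => by simp [aux_odd i hi])]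
    rcases m with _ | m
    · simp [eulerE, eulerEvenAux]; norm_num
    · rw [if_neg (by omega)]
      have h := aux_rec m
      have h3 : ∀ j ∈ Finset.range (m + 1 + 1),
          eulerE (2 * j) / ((2 * j).factorial : ℚ) * (1 / ((2 * (m + 1) - 2 * j).factorial : ℚ) +
            (-1) ^ (2 * (m + 1) - 2 * j) * (1 / ((2 * (m + 1) - 2 * j).factorial : ℚ)))
          = 2 / ((2 * (m + 1)).factorial : ℚ) *
            (((2 * (m + 1)).choose (2 * j) : ℚ) * eulerE (2 * j)) := by
        intro j hj
        have hj' := Finset.mem_range.mp hj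
        rw [Nat.cast_choose ℚ (show 2 * j ≤ 2 * (m + 1) by omega),
          Even.neg_one_pow (by rw [← Nat.mul_sub]; exact even_two_mul _)]
        have := Nat.factorial_ne_zero (2 * (m + 1))
        field_simp
        ring
      rw [Finset.sum_congr rfl h3, ← Finset.mul_sum, h, mul_zero]
  · rw [if_neg (by omega)]
    apply Finset.sum_eq_zero
    intro i hi
    have hi' := Finset.mem_range.mp hi
    rcases Nat.even_or_odd i with h | h
    · have : Odd (2 * m + 1 - i) := by
        rw [Nat.odd_iff]; have := Nat.even_iff.mp h; omega
      rw [this.neg_one_pow]; ring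
    · rw [aux_odd i (Nat.odd_iff.mp h)]; simp

open PowerSeries in
lemma aux_main : ∃ T : PowerSeries ℚ, derivative ℚ T = auxF ^ 2 ∧
    X * T = X - rescale (2 : ℚ) (bernoulliPowerSeries ℚ)
      + rescale (4 : ℚ) (bernoulliPowerSeries ℚ) := by
  have hF := aux_F_mul
  have hem : exp ℚ * evalNegHom (exp ℚ) = 1 := exp_mul_exp_neg_eq_one
  have hb := bernoulliPowerSeries_mul_exp_sub_one ℚ
  have hb2 := congrArg (rescale (2 : ℚ)) hb
  have hb4 := congrArg (rescale (4 : ℚ)) hb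
  have e2 := exp_pow_eq_rescale_exp (A := ℚ) 2
  have e4 := exp_pow_eq_rescale_exp (A := ℚ) 4
  push_cast at e2 e4
  rw [map_mul, map_sub, ← e2, map_one, rescale_X] at hb2
  rw [map_mul, map_sub, ← e4, map_one, rescale_X] at hb4
  have hde : derivative ℚ (exp ℚ) = exp ℚ := derivative_exp ℚ
  have hdem : derivative ℚ (evalNegHom (exp ℚ)) = - evalNegHom (exp ℚ) := by
    have h := congrArg (derivative ℚ) hem
    rw [Derivation.leibniz, hde] at h
    simp only [smul_eq_mul, Derivation.map_one_eq_zero] at h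
    have h0 : exp ℚ ≠ 0 := left_ne_zero_of_mul_eq_one hem
    apply mul_left_cancel₀ h0
    linear_combination h
  set e := exp ℚ
  set em := evalNegHom e
  set b2 := rescale (2 : ℚ) (bernoulliPowerSeries ℚ)
  set b4 := rescale (4 : ℚ) (bernoulliPowerSeries ℚ)
  have c2 : (C (2 : ℚ) : PowerSeries ℚ) = 2 := map_ofNat C 2
  have c4 : (C (4 : ℚ) : PowerSeries ℚ) = 4 := map_ofNat C 4
  have n2 : (2 : PowerSeries ℚ) ≠ 0 := by
    intro h; have := congrArg constantCoeff (c2.trans h); simp at this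
  have n4 : (4 : PowerSeries ℚ) ≠ 0 := by
    intro h; have := congrArg constantCoeff (c4.trans h); simp at this
  rw [c2] at hb2
  rw [c4] at hb4
  have hh : (C (1 / 2 : ℚ) : PowerSeries ℚ) * 2 = 1 := by
    rw [← c2, ← map_mul]; norm_num
  have hs : e + em ≠ 0 := by
    intro h; rw [h, mul_zero] at hF
    exact n2 hF.symm
  have h4 : e ^ 4 - 1 ≠ 0 := by
    intro h; rw [h, mul_zero] at hb4
    exact (mul_ne_zero n4 X_ne_zero) hb4.symm
  have hdF := congrArg (derivative ℚ) hF
  rw [Derivation.leibniz, map_add, hde, hdem, ← c2, derivative_C] at hdF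
  simp only [smul_eq_mul] at hdF
  set c := (C (1 / 2 : ℚ) : PowerSeries ℚ) with hc
  refine ⟨c * ((e - em) * auxF), ?_, ?_⟩
  · apply mul_right_cancel₀ hs
    rw [Derivation.leibniz, Derivation.leibniz, map_sub, hde, hdem, hc, derivative_C, ← hc]
    simp only [smul_eq_mul]
    linear_combination c * (e - em) * hdF + 4 * c * auxF * hem + 2 * auxF * hh - auxF * hF
  · apply mul_right_cancel₀ h4
    have hT : (c * ((e - em) * auxF)) * (e + em) = e - em := by
      linear_combination c * (e - em) * hF + (e - em) * hh
    have h5 : e ^ 4 - 1 = e ^ 2 * (e - em) * (e + em) := by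
      linear_combination (e * em + 1) * hem
    have h6 : X * (c * ((e - em) * auxF)) * (e ^ 4 - 1) = X * (e ^ 2 - 1) ^ 2 := by
      rw [h5]
      have : e * (e - em) = e ^ 2 - 1 := by linear_combination - hem
      rw [← this]
      linear_combination X * e ^ 2 * (e - em) * hT
    rw [h6]
    linear_combination (e ^ 2 + 1) * hb2 - hb4

/-- For every `k ≥ 0`,
`∑_{j=0}^{k} C(2k,2j) E_{2j} E_{2k−2j} = 2^{2k+1}(2^{2k+2}−1) B_{2k+2}/(k+1)`. -/
theorem euler_convolution (k : ℕ) :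
    ∑ j ∈ Finset.range (k + 1),
        ((Nat.choose (2 * k) (2 * j)) : ℚ) * eulerE (2 * j) * eulerE (2 * k - 2 * j)
      = 2 ^ (2 * k + 1) * (2 ^ (2 * k + 2) - 1) * bernoulli (2 * k + 2) / (k + 1) := by
  obtain ⟨T, hT, hX⟩ := aux_main
  have h1 := congrArg (PowerSeries.coeff (2 * k)) hT
  have h2 := congrArg (PowerSeries.coeff (2 * k + 1 + 1)) hX
  rw [PowerSeries.coeff_succ_X_mul, map_add, map_sub, PowerSeries.coeff_X, if_neg (by omega),
    PowerSeries.coeff_rescale, PowerSeries.coeff_rescale, bernoulliPowerSeries,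
    PowerSeries.coeff_mk] at h2
  simp only [Algebra.algebraMap_self, RingHom.id_apply] at h2
  rw [PowerSeries.coeff_derivative, h2, sq, PowerSeries.coeff_mul,
    Finset.Nat.sum_antidiagonal_eq_sum_range_succ_mk, Nat.succ_eq_add_one,
    aux_sum_even _ (fun i hi => by simp [auxF, aux_odd i hi])] at h1
  have h3 : ∀ j ∈ Finset.range (k + 1),
      ((Nat.choose (2 * k) (2 * j)) : ℚ) * eulerE (2 * j) * eulerE (2 * k - 2 * j)
      = ((2 * k).factorial : ℚ) * (PowerSeries.coeff (2 * j) auxF *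
          PowerSeries.coeff (2 * k - 2 * j) auxF) := by
    intro j hj
    have hj' := Finset.mem_range.mp hj
    rw [Nat.cast_choose ℚ (show 2 * j ≤ 2 * k by omega)]
    simp only [auxF, PowerSeries.coeff_mk]
    field_simp
  rw [Finset.sum_congr rfl h3, ← Finset.mul_sum, ← h1, Nat.factorial_succ, Nat.factorial_succ,
    show (4 : ℚ) = 2 * 2 by norm_num, mul_pow]
  have := Nat.factorial_ne_zero (2 * k)
  have hk : (k : ℚ) + 1 ≠ 0 := by positivity
  have hk2 : 2 * (k : ℚ) + 1 ≠ 0 := by positivity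
  have hk3 : 2 * (k : ℚ) + 1 + 1 ≠ 0 := by positivity
  push_cast
  field_simp
  ring
end

section
/- For every integer k ≥ 2, ∑_{j=0}^{k−2} C(2k,2j+2) (1−2^{−2−2j})(1−2^{2−2k+2j}) B_{2j+2} B_{2k−2j−2} = −(2k−1)(1−2^{−2k}) B_{2k}. (For example, for k = 2 both sides equal 3/32.) -/
open PowerSeries in
theorem aux_ps (D : PowerSeries ℚ)
    (hD : D = PowerSeries.mk (fun n => (1 - (1/2:ℚ)^n) * bernoulli n / (n.factorial : ℚ)) + C (1/4 : ℚ) * X) :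
    D * D = C (1/16 : ℚ) * X ^ 2 + D - X * derivative ℚ D := by
  set F : PowerSeries ℚ := rescale (1/2 : ℚ) (exp ℚ) with hF
  have hFF : F * F = exp ℚ := by
    have h := exp_mul_exp_eq_exp_add (A := ℚ) (1/2) (1/2)
    rw [← hF] at h
    rw [h]; norm_num
  have hB := bernoulliPowerSeries_mul_exp_sub_one ℚ
  have hB2 : rescale (1/2 : ℚ) (bernoulliPowerSeries ℚ) * (F - 1) = C (1/2 : ℚ) * X := by
    have := congrArg (rescale (1/2 : ℚ)) hB
    rw [map_mul, map_sub, rescale_X, map_one] at this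
    exact this
  have hG : D = bernoulliPowerSeries ℚ - rescale (1/2 : ℚ) (bernoulliPowerSeries ℚ) + C (1/4 : ℚ) * X := by
    rw [hD]; congr 1
    ext n
    simp only [bernoulliPowerSeries, coeff_mk, map_sub, coeff_rescale, Algebra.algebraMap_self, RingHom.id_apply]
    ring
  have hF' : derivative ℚ F = C (1/2 : ℚ) * F := by
    ext n
    have : ((n : ℚ) + 1) ≠ 0 := by positivity
    have h2 : (n.factorial : ℚ) ≠ 0 := by positivity
    simp only [hF, coeff_derivative, coeff_rescale, coeff_exp, coeff_C_mul, Nat.factorial_succ, Algebra.algebraMap_self, RingHom.id_apply]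
    push_cast
    field_simp
    ring
  have c0 : constantCoeff F = 1 := by
    simp [hF, ← coeff_zero_eq_constantCoeff_apply, coeff_rescale, coeff_exp]
  have n1 : F + 1 ≠ 0 := by
    intro h
    have := congrArg constantCoeff h
    simp [c0] at this
  have n2 : F - 1 ≠ 0 := by
    intro h
    have := congrArg (coeff 1) h
    simp [hF, coeff_rescale, coeff_exp, coeff_one] at this
  obtain ⟨c, hc⟩ : ∃ c : PowerSeries ℚ, c = C (1/16 : ℚ) := ⟨_, rfl⟩
  have h16 : 16 * c = 1 := by
    rw [hc, show (16 : PowerSeries ℚ) = C (16:ℚ) from (map_ofNat C 16).symm, ← map_mul]; norm_num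
  have h4 : C (1/4 : ℚ) = 4 * c := by
    rw [hc, show (4 : PowerSeries ℚ) = C (4:ℚ) from (map_ofNat C 4).symm, ← map_mul]; norm_num
  have h2 : C (1/2 : ℚ) = 8 * c := by
    rw [hc, show (8 : PowerSeries ℚ) = C (8:ℚ) from (map_ofNat C 8).symm, ← map_mul]; norm_num
  rw [← hFF] at hB
  rw [h2] at hB2 hF'
  rw [h4] at hG
  rw [← hc]
  have e1 : D * (F + 1) = 4 * c * X * (F - 1) := by
    apply mul_right_cancel₀ n2
    rw [hG]
    linear_combination hB - (F+1) * hB2 - X * h16 * (1 : PowerSeries ℚ)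
  have e2 : derivative ℚ D * (F + 1) + D * (8 * c * F) = 4 * c * (F - 1) + 4 * c * X * (8 * c * F) := by
    have := congrArg (derivative ℚ) e1
    have hc' : derivative ℚ c = 0 := by rw [hc]; exact derivative_C
    simp only [Derivation.leibniz, map_add, map_sub, hF', hc', derivative_X, smul_eq_mul, Derivation.map_one_eq_zero] at this
    have h4' : derivative ℚ (4 : PowerSeries ℚ) = 0 := by
      rw [show (4 : PowerSeries ℚ) = C (4:ℚ) from (map_ofNat C 4).symm]; exact derivative_C
    rw [h4'] at this
    linear_combination this
  apply mul_right_cancel₀ (mul_ne_zero n1 n1)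
  linear_combination (D*(F+1) + 4*c*X*(F-1)) * e1 - (F+1)*e1 + X*(F+1)*e2 - 8*c*X*F*e1 + c*X^2*(F+1)^2*h16

theorem aux_sum (f : ℕ → ℚ) (hf : ∀ j, f (2*j+1) = 0) (m : ℕ) :
    ∑ i ∈ Finset.range (2*m+1), f i = ∑ j ∈ Finset.range (m+1), f (2*j) := by
  induction m with
  | zero => simp
  | succ m ih =>
    rw [Finset.sum_range_succ _ (m+1), ← ih, show 2*(m+1)+1 = 2*m+1+1+1 by ring,
      Finset.sum_range_succ, Finset.sum_range_succ, hf]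
    simp [mul_add]


/-- For every integer `k ≥ 2`,
`∑_{j=0}^{k−2} C(2k,2j+2)(1−2^{−2−2j})(1−2^{2−2k+2j}) B_{2j+2} B_{2k−2j−2}
= −(2k−1)(1−2^{−2k}) B_{2k}`. -/
theorem bernoulli_convolution_identity (k : ℕ) (hk : 2 ≤ k) :
    ∑ j ∈ Finset.range (k - 1),
        ((Nat.choose (2 * k) (2 * j + 2)) : ℚ)
          * (1 - (2 : ℚ) ^ (-2 - 2 * (j : ℤ))) * (1 - (2 : ℚ) ^ (2 - 2 * (k : ℤ) + 2 * j))
          * bernoulli (2 * j + 2) * bernoulli (2 * k - 2 * j - 2)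
      = -((2 * k - 1) : ℚ) * (1 - (2 : ℚ) ^ (-(2 * (k : ℤ)))) * bernoulli (2 * k) := by
  set d : ℕ → ℚ := fun n => (1 - (1/2:ℚ)^n) * bernoulli n / (n.factorial : ℚ) + (if n = 1 then 1/4 else 0) with hd
  have hodd : ∀ j, d (2*j+1) = 0 := by
    intro j
    rcases Nat.eq_zero_or_pos j with rfl | hj
    · norm_num [hd]
    · have : bernoulli (2*j+1) = 0 := bernoulli_eq_zero_of_odd ⟨j, rfl⟩ (by omega)
      simp [hd, this]; omega
  have hev : ∀ j, d (2*j) = (1 - (1/2:ℚ)^(2*j)) * bernoulli (2*j) / ((2*j).factorial : ℚ) := by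
    intro j
    simp [hd]
  have hcd : ∀ n, PowerSeries.coeff n (PowerSeries.mk (fun n => (1 - (1/2:ℚ)^n) * bernoulli n / (n.factorial : ℚ)) + PowerSeries.C (1/4 : ℚ) * PowerSeries.X) = d n := by
    intro n
    simp [hd, PowerSeries.coeff_X]
  have key0 := aux_ps _ rfl
  generalize (PowerSeries.mk (fun n => (1 - (1/2:ℚ)^n) * bernoulli n / (n.factorial : ℚ)) + PowerSeries.C (1/4 : ℚ) * PowerSeries.X) = D at key0 hcd
  have key := congrArg (PowerSeries.coeff (2*k)) key0
  obtain ⟨m, rfl⟩ : ∃ m, k = m + 2 := ⟨k - 2, by omega⟩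
  rw [PowerSeries.coeff_mul, Finset.Nat.sum_antidiagonal_eq_sum_range_succ_mk] at key
  simp only [map_add, map_sub] at key
  rw [show 2 * (m+2) = (2*m+3)+1 by ring, PowerSeries.coeff_succ_X_mul,
    PowerSeries.coeff_derivative] at key
  simp only [hcd, PowerSeries.coeff_C_mul, PowerSeries.coeff_X_pow] at key
  rw [if_neg (by omega), show (2*m+3)+1 = 2 * (m+2) by ring, Nat.succ_eq_add_one, aux_sum, Finset.sum_range_succ, Finset.sum_range_succ'] at key
  · have hd0 : d 0 = 0 := by simp [hd]
    simp only [mul_zero, hd0, Nat.sub_self, zero_mul, add_zero, zero_add] at key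
    have hf : ((2*(m+2)).factorial : ℚ) ≠ 0 := by positivity
    have hR : -((2 * ((m+2:ℕ):ℚ) - 1) : ℚ) * (1 - (2 : ℚ) ^ (-(2 * ((m+2 : ℕ) : ℤ)))) * bernoulli (2 * (m+2)) = ((2*(m+2)).factorial : ℚ) * (d (2*(m+2)) - d (2*(m+2)) * (((2*m+3 : ℕ):ℚ) + 1)) := by
      rw [hev, show (-(2 * ((m+2 : ℕ) : ℤ))) = -((2*(m+2) : ℕ) : ℤ) by push_cast; ring, zpow_neg, zpow_natCast, one_div, inv_pow]
      field_simp
      push_cast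
      ring
    rw [hR, ← key, Finset.mul_sum]
    refine Finset.sum_congr (by congr 1) fun j hj => ?_
    have hj' : j < m + 1 := by simpa using hj
    obtain ⟨l, rfl⟩ : ∃ l, m = j + l := ⟨m - j, by omega⟩
    rw [show 2 * (j+l+2) - 2*(j+1) = 2*(l+1) by omega, show 2 * (j+l+2) - 2*j - 2 = 2*(l+1) by omega, hev, hev,
      Nat.cast_choose ℚ (show 2*j+2 ≤ 2*(j+l+2) by omega), show 2 * (j+l+2) - (2*j+2) = 2*(l+1) by omega,
      show (-2 - 2 * (j:ℤ)) = -((2*(j+1) : ℕ) : ℤ) by push_cast; ring,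
      show (2 - 2 * ((j+l+2 : ℕ):ℤ) + 2 * j) = -((2*(l+1) : ℕ) : ℤ) by push_cast; ring,
      zpow_neg, zpow_neg, zpow_natCast, zpow_natCast, one_div, inv_pow, inv_pow, show 2*j+2 = 2*(j+1) by ring]
    ring
  · intro j
    simp [hodd]
end

section
/- Let k ≥ 2 be an integer, set A_j = ((2π)^{2k}/(2k)!) C(2k,2j+2) (1−2^{−2−2j})(1−2^{2−2k+2j}) B_{2j+2} B_{2k−2j−2} for 0 ≤ j ≤ k−2 (these are the coefficients of the reciprocal polynomial Y_k(z)/z), and set c = π²(1−2^{2−2k})/(8(1−2^{3−2k})). Then ∑_{j=0}^{k−2} |c·A_j − A_{k−2}| < |A_{k−2}|. (This is Schinzel's sufficient condition, in strict form, for the polynomial ∑_{j=0}^{k−2} A_j z^j to have all of its zeros on the unit circle and simple.) -/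
noncomputable def sZ (m : ℕ) : ℝ := ∑' n : ℕ, 1 / (n : ℝ) ^ (2 * m)

noncomputable def sL (m : ℕ) : ℝ := (1 - (1 / 4 : ℝ) ^ m) * sZ m

lemma sZ_summable (m : ℕ) (hm : 1 ≤ m) : Summable (fun n : ℕ => 1 / (n : ℝ) ^ (2 * m)) :=
  (hasSum_zeta_nat (k := m) (by omega)).summable

lemma sL_basic (m : ℕ) (hm : 1 ≤ m) :
    1 ≤ sL m ∧ sL m ≤ 1 + (1 / 4 : ℝ) ^ m * sZ m := by
  have hs := sZ_summable m hm
  set f : ℕ → ℝ := fun n => 1 / (n : ℝ) ^ (2 * m) with hf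
  have hf0 : ∀ n, 0 ≤ f n := fun n => by simp only [hf]; positivity
  have he : Summable (fun n => f (2 * n)) :=
    hs.comp_injective (i := fun n : ℕ => 2 * n) (fun a b h => by simpa using h)
  have ho : Summable (fun n => f (2 * n + 1)) :=
    hs.comp_injective (i := fun n : ℕ => 2 * n + 1) (fun a b h => by simpa using h)
  have hE : ∑' n, f (2 * n) = (1 / 4 : ℝ) ^ m * sZ m := by
    rw [sZ, ← tsum_mul_left]
    congr 1; ext n
    simp only [hf]
    push_cast
    rw [mul_pow, pow_mul 2 2 m, one_div_pow]
    norm_num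
    ring
  have hsum : ∑' n, f (2 * n) + ∑' n, f (2 * n + 1) = sZ m := tsum_even_add_odd he ho
  have hL : sL m = ∑' n, f (2 * n + 1) := by
    rw [sL]; linarith
  have hs1 := ho.tsum_eq_zero_add
  have ho' : Summable (fun n => f (2 * (n + 1) + 1)) := (summable_nat_add_iff 1).2 ho
  have he' : Summable (fun n => f (2 * (n + 1))) := (summable_nat_add_iff 1).2 he
  have hs2 := he.tsum_eq_zero_add
  have f1 : f (2 * 0 + 1) = 1 := by simp [hf]
  have f0 : f (2 * 0) = 0 := by simp [hf]; omega
  have hpos : 0 ≤ ∑' n, f (2 * (n + 1) + 1) := tsum_nonneg (fun n => hf0 _)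
  have hle : ∑' n, f (2 * (n + 1) + 1) ≤ ∑' n, f (2 * (n + 1)) := by
    refine ho'.tsum_le_tsum (fun n => ?_) he'
    simp only [hf]
    apply one_div_le_one_div_of_le
    · positivity
    · gcongr; omega
  constructor <;> linarith

lemma quarter_le (m : ℕ) (hm : 1 ≤ m) : (1 / 4 : ℝ) ^ m ≤ 1 / 4 := by
  calc (1 / 4 : ℝ) ^ m ≤ (1 / 4 : ℝ) ^ 1 := pow_le_pow_of_le_one (by norm_num) (by norm_num) hm
    _ = _ := by norm_num

lemma quarter_le2 (m : ℕ) (hm : 2 ≤ m) : (1 / 4 : ℝ) ^ m ≤ 1 / 16 := by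
  calc (1 / 4 : ℝ) ^ m ≤ (1 / 4 : ℝ) ^ 2 := pow_le_pow_of_le_one (by norm_num) (by norm_num) hm
    _ = _ := by norm_num

lemma sL_upper (m : ℕ) (hm : 1 ≤ m) :
    sL m * (1 - 2 * (1 / 4 : ℝ) ^ m) ≤ 1 - (1 / 4 : ℝ) ^ m := by
  obtain ⟨h1, h2⟩ := sL_basic m hm
  have hx := quarter_le m hm
  have hx0 : (0 : ℝ) < (1 / 4 : ℝ) ^ m := by positivity
  unfold sL at *
  set x := (1 / 4 : ℝ) ^ m
  have : (1 - 2 * x) * sZ m ≤ 1 := by linarith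
  nlinarith

lemma sL_upper2 (m : ℕ) (hm : 2 ≤ m) : sL m ≤ 1 + 8 / 7 * (1 / 4 : ℝ) ^ m := by
  have h := sL_upper m (by omega)
  have hx := quarter_le2 m hm
  have hx0 : (0 : ℝ) < (1 / 4 : ℝ) ^ m := by positivity
  set x := (1 / 4 : ℝ) ^ m
  by_contra! hc
  nlinarith

lemma sL_one : sL 1 = Real.pi ^ 2 / 8 := by
  have : sZ 1 = Real.pi ^ 2 / 6 := by
    rw [sZ]; exact hasSum_zeta_two.tsum_eq
  rw [sL, this]; ring

lemma bern_eq (m : ℕ) (hm : 1 ≤ m) :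
    (1 - (1 / 4 : ℝ) ^ m) * ((bernoulli (2 * m) : ℚ) : ℝ) =
      (-1) ^ (m + 1) * 2 * (Nat.factorial (2 * m)) * sL m / (2 * Real.pi) ^ (2 * m) := by
  have h : sZ m = _ := (hasSum_zeta_nat (k := m) (by omega)).tsum_eq
  have h2 : (2 : ℝ) ^ (2 * m) = 2 * 2 ^ (2 * m - 1) := by
    rw [← pow_succ']; congr 1; omega
  have hpi := Real.pi_pos
  have hf : ((Nat.factorial (2 * m) : ℕ) : ℝ) ≠ 0 := by positivity
  have hs : ((-1 : ℝ) ^ (m + 1)) * (-1) ^ (m + 1) = 1 := by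
    rw [← mul_pow]; norm_num
  rw [sL, h, mul_pow, h2]
  field_simp
  linear_combination (-(1 : ℝ)) * ((bernoulli (2 * m) : ℚ) : ℝ) * (1 - (1 / 4 : ℝ) ^ m) * hs

lemma A_eq (j q : ℕ) (hq : 1 ≤ q) :
    (2 * Real.pi) ^ (2 * (j + q + 1)) / (Nat.factorial (2 * (j + q + 1)))
      * ((Nat.choose (2 * (j + q + 1)) (2 * j + 2)) : ℝ)
      * (1 - (2 : ℝ) ^ (-2 - 2 * (j : ℤ)))
      * (1 - (2 : ℝ) ^ (2 - 2 * ((j + q + 1 : ℕ) : ℤ) + 2 * j))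
      * ((bernoulli (2 * j + 2) : ℚ) : ℝ)
      * ((bernoulli (2 * (j + q + 1) - 2 * j - 2) : ℚ) : ℝ)
    = (-1) ^ (j + q + 1) * (4 * (sL (j + 1) * sL q)) := by
  have e1 : (2 : ℝ) ^ (-2 - 2 * (j : ℤ)) = (1 / 4 : ℝ) ^ (j + 1) := by
    rw [show (-2 - 2 * (j : ℤ)) = (-2 : ℤ) * ((j + 1 : ℕ) : ℤ) by push_cast; ring, zpow_mul,
      zpow_natCast]
    norm_num
  have e2 : (2 : ℝ) ^ (2 - 2 * ((j + q + 1 : ℕ) : ℤ) + 2 * j) = (1 / 4 : ℝ) ^ q := by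
    rw [show (2 - 2 * ((j + q + 1 : ℕ) : ℤ) + 2 * j) = (-2 : ℤ) * (q : ℤ) by push_cast; ring,
      zpow_mul, zpow_natCast]
    norm_num
  have e3 : 2 * (j + q + 1) - 2 * j - 2 = 2 * q := by omega
  have e4 : 2 * j + 2 = 2 * (j + 1) := by ring
  rw [e1, e2, e3, e4]
  have b1 := bern_eq (j + 1) (by omega)
  have b2 := bern_eq q hq
  have hch : ((Nat.choose (2 * (j + q + 1)) (2 * (j + 1)) : ℕ) : ℝ)
      * (Nat.factorial (2 * (j + 1))) * (Nat.factorial (2 * q))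
      = (Nat.factorial (2 * (j + q + 1))) := by
    have := Nat.choose_mul_factorial_mul_factorial (n := 2 * (j + q + 1)) (k := 2 * (j + 1))
      (by omega)
    rw [show 2 * (j + q + 1) - 2 * (j + 1) = 2 * q by omega] at this
    exact_mod_cast this
  have hf : ((Nat.factorial (2 * (j + q + 1)) : ℕ) : ℝ) ≠ 0 := by positivity
  have hpi := Real.pi_pos
  have hp : (2 * Real.pi) ^ (2 * (j + q + 1))
      = (2 * Real.pi) ^ (2 * (j + 1)) * (2 * Real.pi) ^ (2 * q) := by
    rw [← pow_add]; congr 1; ring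
  have hp1 : (2 * Real.pi) ^ (2 * (j + 1)) ≠ 0 := by positivity
  have hp2 : (2 * Real.pi) ^ (2 * q) ≠ 0 := by positivity
  have hsg : (-1 : ℝ) ^ (j + 1 + 1) * (-1) ^ (q + 1) = (-1) ^ (j + q + 1) := by
    rw [← pow_add, show j + 1 + 1 + (q + 1) = (j + q + 1) + 2 by ring, pow_add]; norm_num
  set P1 := (2 * Real.pi) ^ (2 * (j + 1))
  set P2 := (2 * Real.pi) ^ (2 * q)
  set F := ((Nat.factorial (2 * (j + q + 1)) : ℕ) : ℝ)
  set F1 := ((Nat.factorial (2 * (j + 1)) : ℕ) : ℝ)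
  set F2 := ((Nat.factorial (2 * q) : ℕ) : ℝ)
  set C := ((Nat.choose (2 * (j + q + 1)) (2 * (j + 1)) : ℕ) : ℝ)
  rw [hp]
  calc _ = P1 * P2 / F * C * ((1 - (1 / 4 : ℝ) ^ (j + 1)) * ((bernoulli (2 * (j + 1)) : ℚ) : ℝ))
        * ((1 - (1 / 4 : ℝ) ^ q) * ((bernoulli (2 * q) : ℚ) : ℝ)) := by ring
    _ = ((-1 : ℝ) ^ (j + 1 + 1) * (-1) ^ (q + 1)) * (4 * (sL (j + 1) * sL q))
        * ((C * F1 * F2) / F) := by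
      rw [b1, b2]; field_simp; ring
    _ = _ := by rw [hsg, hch, div_self hf, mul_one]

lemma mid_bound (p q : ℕ) (hp : 2 ≤ p) (hq : 2 ≤ q) :
    sL p * sL q ≤ 1 + 5 / 4 * ((1 / 4 : ℝ) ^ p + (1 / 4 : ℝ) ^ q) := by
  have h1 := sL_upper2 p hp
  have h2 := sL_upper2 q hq
  have l1 := (sL_basic p (by omega)).1
  have l2 := (sL_basic q (by omega)).1
  have hx := quarter_le2 p hp
  have hy := quarter_le2 q hq
  have hx0 : (0 : ℝ) < (1 / 4 : ℝ) ^ p := by positivity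
  have hy0 : (0 : ℝ) < (1 / 4 : ℝ) ^ q := by positivity
  have : sL p * sL q ≤ (1 + 8 / 7 * (1 / 4 : ℝ) ^ p) * (1 + 8 / 7 * (1 / 4 : ℝ) ^ q) := by
    gcongr
  nlinarith

lemma geo_bound (n : ℕ) : ∑ i ∈ Finset.range n, (1 / 4 : ℝ) ^ (i + 2) ≤ 1 / 12 := by
  have : ∑ i ∈ Finset.range n, (1 / 4 : ℝ) ^ (i + 2) = 1 / 12 - 1 / 12 * (1 / 4) ^ n := by
    induction n with
    | zero => norm_num
    | succ n ih => rw [Finset.sum_range_succ, ih]; ring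
  have h : (0 : ℝ) < (1 / 4) ^ n := by positivity
  linarith

lemma kx_bound (n : ℕ) : ((n : ℝ) + 4) * (1 / 4 : ℝ) ^ (n + 3) ≤ 1 / 16 := by
  induction n with
  | zero => norm_num
  | succ n ih =>
    have h : (0 : ℝ) < (1 / 4) ^ (n + 3) := by positivity
    have : (0 : ℝ) ≤ n * (1 / 4) ^ (n + 3) := by positivity
    rw [show n + 1 + 3 = (n + 3) + 1 by ring, pow_succ]
    push_cast
    nlinarith

lemma pi_sq_lt : Real.pi ^ 2 < 9.93 := by
  have := Real.pi_lt_d2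
  have := Real.pi_pos
  nlinarith

lemma mid_sum (n : ℕ) :
    ∑ i ∈ Finset.range (n + 1), sL (i + 2) * sL (n + 2 - i) ≤ (n : ℝ) + 1 + 5 / 24 := by
  have h1 : ∀ i ∈ Finset.range (n + 1), sL (i + 2) * sL (n + 2 - i) ≤
      1 + 5 / 4 * ((1 / 4 : ℝ) ^ (i + 2) + (1 / 4 : ℝ) ^ (n + 2 - i)) := fun i hi => by
    rw [Finset.mem_range] at hi
    exact mid_bound _ _ (by omega) (by omega)
  refine (Finset.sum_le_sum h1).trans ?_
  rw [Finset.sum_add_distrib, ← Finset.mul_sum, Finset.sum_add_distrib]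
  have h2 : ∑ i ∈ Finset.range (n + 1), (1 / 4 : ℝ) ^ (n + 2 - i)
      = ∑ i ∈ Finset.range (n + 1), (1 / 4 : ℝ) ^ (i + 2) := by
    rw [← Finset.sum_range_reflect]
    apply Finset.sum_congr rfl
    intro i hi
    rw [Finset.mem_range] at hi
    congr 1; omega
  rw [h2]
  have := geo_bound (n + 1)
  simp
  simp at this
  linarith

/-- main sum bound -/
lemma total_bound (k : ℕ) (hk : 2 ≤ k) :
    (1 - (1 / 4 : ℝ) ^ (k - 1)) * ∑ j ∈ Finset.range (k - 1), sL (j + 1) * sL (k - 1 - j)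
      < k * sL (k - 1) * (1 - 2 * (1 / 4 : ℝ) ^ (k - 1)) := by
  have hpi := pi_sq_lt
  have hpi0 : 0 < Real.pi ^ 2 := by have := Real.pi_pos; positivity
  obtain rfl | rfl | hk4 : k = 2 ∨ k = 3 ∨ 4 ≤ k := by omega
  · simp [sL_one]
    nlinarith
  · have := (sL_basic 2 (by norm_num)).1
    simp [sL_one, Finset.sum_range_succ]
    nlinarith
  · obtain ⟨n, rfl⟩ : ∃ n, k = n + 4 := ⟨k - 4, by omega⟩
    have hM := (sL_basic (n + 3) (by omega)).1
    have hS := mid_sum n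
    have hx := kx_bound n
    have hx0 : (0 : ℝ) < (1 / 4) ^ (n + 3) := by positivity
    have hx1 := quarter_le (n + 3) (by omega)
    have hsum : ∑ j ∈ Finset.range (n + 4 - 1), sL (j + 1) * sL (n + 4 - 1 - j)
        = 2 * sL 1 * sL (n + 3)
          + ∑ i ∈ Finset.range (n + 1), sL (i + 2) * sL (n + 2 - i) := by
      rw [show n + 4 - 1 = n + 1 + 1 + 1 by omega, Finset.sum_range_succ, Finset.sum_range_succ']
      rw [show n + 1 + 1 + 1 - (n + 1 + 1) = 1 by omega]
      have : ∀ i, n + 1 + 1 + 1 - (i + 1) = n + 2 - i := fun i => by omega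
      simp only [this, Nat.sub_zero, zero_add, Nat.add_assoc]
      norm_num
      ring
    rw [hsum, sL_one, show n + 4 - 1 = n + 3 by omega]
    set x := (1 / 4 : ℝ) ^ (n + 3)
    set M := sL (n + 3)
    set S := ∑ i ∈ Finset.range (n + 1), sL (i + 2) * sL (n + 2 - i)
    have hn : (0 : ℝ) ≤ n := Nat.cast_nonneg n
    have hT : 2 * (Real.pi ^ 2 / 8) * M + S ≤ ((n : ℝ) + 3.7) * M := by
      nlinarith
    have h1 : (1 - x) * (2 * (Real.pi ^ 2 / 8) * M + S) ≤ (1 - x) * (((n : ℝ) + 3.7) * M) := by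
      apply mul_le_mul_of_nonneg_left hT; linarith
    have h2 : (1 - x) * ((n : ℝ) + 3.7) < (n + 4) * (1 - 2 * x) := by
      nlinarith
    have h3 := mul_lt_mul_of_pos_right h2 (by linarith : 0 < M)
    push_cast
    nlinarith

/-- Schinzel's condition (strict form) holds for the coefficients
`A_j = ((2π)^{2k}/(2k)!) C(2k,2j+2)(1−2^{−2−2j})(1−2^{2−2k+2j}) B_{2j+2} B_{2k−2j−2}`
of the reciprocal polynomial `Y_k(z)/z`, with `c = π²(1−2^{2−2k})/(8(1−2^{3−2k}))`. -/
theorem schinzel_condition_for_Y (k : ℕ) (hk : 2 ≤ k)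
    (A : ℕ → ℝ)
    (hA : ∀ j, A j = (2 * Real.pi) ^ (2 * k) / (Nat.factorial (2 * k))
      * ((Nat.choose (2 * k) (2 * j + 2)) : ℝ)
      * (1 - (2 : ℝ) ^ (-2 - 2 * (j : ℤ))) * (1 - (2 : ℝ) ^ (2 - 2 * (k : ℤ) + 2 * j))
      * ((bernoulli (2 * j + 2) : ℚ) : ℝ) * ((bernoulli (2 * k - 2 * j - 2) : ℚ) : ℝ))
    (c : ℝ)
    (hc : c = Real.pi ^ 2 * (1 - (2 : ℝ) ^ (2 - 2 * (k : ℤ)))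
      / (8 * (1 - (2 : ℝ) ^ (3 - 2 * (k : ℤ))))) :
    ∑ j ∈ Finset.range (k - 1), |c * A j - A (k - 2)| < |A (k - 2)| := by
  have hAj : ∀ j, j < k - 1 → A j = (-1) ^ k * (4 * (sL (j + 1) * sL (k - 1 - j))) := by
    intro j hj
    obtain ⟨q, rfl⟩ : ∃ q, k = j + q + 1 := ⟨k - 1 - j, by omega⟩
    rw [hA, A_eq j q (by omega), show j + q + 1 - 1 - j = q by omega]
  have hlast := hAj (k - 2) (by omega)
  rw [show k - 2 + 1 = k - 1 by omega, show k - 1 - (k - 2) = 1 by omega] at hlast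
  have z1 : (2 : ℝ) ^ (2 - 2 * (k : ℤ)) = (1 / 4 : ℝ) ^ (k - 1) := by
    rw [show (2 - 2 * (k : ℤ)) = (-2 : ℤ) * ((k - 1 : ℕ) : ℤ) by
      rw [Nat.cast_sub (by omega)]; push_cast; ring, zpow_mul, zpow_natCast]
    norm_num
  have z2 : (2 : ℝ) ^ (3 - 2 * (k : ℤ)) = 2 * (1 / 4 : ℝ) ^ (k - 1) := by
    rw [← z1, show 3 - 2 * (k : ℤ) = 1 + (2 - 2 * (k : ℤ)) by ring, zpow_add₀ (by norm_num)]
    norm_num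
  have hx := quarter_le (k - 1) (by omega)
  have hx0 : (0 : ℝ) < (1 / 4) ^ (k - 1) := by positivity
  have hU := sL_upper (k - 1) (by omega)
  have hM := (sL_basic (k - 1) (by omega)).1
  have hT := total_bound k hk
  have hl1 := (sL_basic 1 le_rfl).1
  rw [z1, z2] at hc
  set x := (1 / 4 : ℝ) ^ (k - 1)
  set M := sL (k - 1)
  have hd : 0 < 1 - 2 * x := by linarith
  have hc' : c = sL 1 * ((1 - x) / (1 - 2 * x)) := by
    rw [hc, sL_one]; field_simp
  set r := (1 - x) / (1 - 2 * x) with hr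
  have hMr : M ≤ r := by rw [hr, le_div_iff₀ hd]; exact hU
  have hTr : r * ∑ j ∈ Finset.range (k - 1), sL (j + 1) * sL (k - 1 - j) < k * M := by
    rw [hr, div_mul_eq_mul_div, div_lt_iff₀ hd]; exact hT
  have hsg : |(-1 : ℝ) ^ k| = 1 := by simp
  have hterm : ∀ j ∈ Finset.range (k - 1), |c * A j - A (k - 2)|
      = 4 * sL 1 * (r * (sL (j + 1) * sL (k - 1 - j)) - M) := by
    intro j hj
    rw [Finset.mem_range] at hj
    have a1 := (sL_basic (j + 1) (by omega)).1
    have a2 := (sL_basic (k - 1 - j) (by omega)).1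
    rw [hAj j hj, hlast, hc', show sL 1 * r * ((-1) ^ k * (4 * (sL (j + 1) * sL (k - 1 - j))))
      - (-1) ^ k * (4 * (M * sL 1))
      = (-1) ^ k * (4 * sL 1 * (r * (sL (j + 1) * sL (k - 1 - j)) - M)) by ring,
      abs_mul, hsg, one_mul, abs_of_nonneg]
    apply mul_nonneg (by linarith)
    have : 1 ≤ sL (j + 1) * sL (k - 1 - j) := by nlinarith
    nlinarith
  rw [Finset.sum_congr rfl hterm, ← Finset.mul_sum, Finset.sum_sub_distrib, ← Finset.mul_sum,
    hlast, abs_mul, hsg, one_mul, abs_of_nonneg (by nlinarith)]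
  simp only [Finset.sum_const, Finset.card_range, nsmul_eq_mul]
  rw [Nat.cast_sub (by omega : 1 ≤ k)]
  push_cast
  have : r * ∑ j ∈ Finset.range (k - 1), sL (j + 1) * sL (k - 1 - j) - ((k : ℝ) - 1) * M < M := by
    linarith
  nlinarith
end
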